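/- arXiv:2405.14914 — 3 statements merged into one kernel-verified Lean document; each statement's English description precedes it below -/
import Mathlib

section
/- Let g ≥ 1 and α ≥ 1 be integers and let 𝔽_q be a finite field. The number of GL₂(R)-simultaneous-conjugacy classes of absolutely indecomposable tuples x ∈ M₂(R)^g equals the rational number q^{2αg−1}·(q^{2g}−1)·(q^{α(2g−3)}−1) / ((q²−1)·(q^{2g−3}−1)). -/
/-- The ring of truncated polynomials `F[t]/(t^α)`. -/
abbrev TruncRing (F : Type) [CommRing F] (α : ℕ) : Type :=
  Polynomial F ⧸ Ideal.span {(Polynomial.X : Polynomial F) ^ α}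

/-- The image of `t` in `F[t]/(t^α)`. -/
noncomputable def tvar (F : Type) [CommRing F] (α : ℕ) : TruncRing F α :=
  Ideal.Quotient.mk _ (Polynomial.X : Polynomial F)
/-- The ring homomorphism `F[t]/(t^α) → K[t]/(t^α)` induced by a ring homomorphism
`φ : F → K`. -/
noncomputable def truncMap {F K : Type} [CommRing F] [CommRing K] (φ : F →+* K)
    (α : ℕ) : TruncRing F α →+* TruncRing K α :=
  Ideal.Quotient.lift _
    ((Ideal.Quotient.mk (Ideal.span {(Polynomial.X : Polynomial K) ^ α})).comp
      (Polynomial.mapRingHom φ))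
    (by
      intro a ha
      rw [Ideal.mem_span_singleton] at ha
      obtain ⟨c, rfl⟩ := ha
      have h1 : (Polynomial.mapRingHom φ) ((Polynomial.X : Polynomial F) ^ α * c)
          = (Polynomial.X : Polynomial K) ^ α * Polynomial.map φ c := by
        simp [Polynomial.coe_mapRingHom]
      rw [RingHom.comp_apply, h1, Ideal.Quotient.eq_zero_iff_mem]
      exact Ideal.mul_mem_right _ _ (Ideal.subset_span rfl))

/-- The `g`-tuple `x` of `2×2` matrices over `R` is simultaneously diagonalizable: some
`P ∈ GL₂(R)` makes all `P x_i P⁻¹` diagonal. -/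
def SimDiagonalizable {R : Type} [CommRing R] {g : ℕ}
    (x : Fin g → Matrix (Fin 2) (Fin 2) R) : Prop :=
  ∃ P : (Matrix (Fin 2) (Fin 2) R)ˣ, ∀ i : Fin g,
    ((P : Matrix (Fin 2) (Fin 2) R) * x i *
      ((P⁻¹ : (Matrix (Fin 2) (Fin 2) R)ˣ) : Matrix (Fin 2) (Fin 2) R)).IsDiag

/-- `x ∈ M₂(R)^g` is absolutely indecomposable: for every finite field extension `K` of
`F`, the tuple obtained by applying `F[t]/(t^α) → K[t]/(t^α)` entrywise is not
simultaneously diagonalizable. -/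
def AbsIndecTwo (F : Type) [Field F] (α g : ℕ)
    (x : Fin g → Matrix (Fin 2) (Fin 2) (TruncRing F α)) : Prop :=
  ∀ (K : Type) [Field K] [Algebra F K] [FiniteDimensional F K],
    ¬ SimDiagonalizable (fun i => (x i).map (truncMap (algebraMap F K) α))

open Polynomial in
/-- The polynomial of degree `< n` with prescribed coefficients. -/
noncomputable def polyOfCoeffs {F : Type} [CommRing F] {n : ℕ} (c : Fin n → F) : F[X] :=
  ∑ k, C (c k) * X ^ (k : ℕ)

theorem coeff_polyOfCoeffs {F : Type} [CommRing F] {n : ℕ} (c : Fin n → F) (k : Fin n) :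
    (polyOfCoeffs c).coeff k = c k := by
  simp [polyOfCoeffs, Polynomial.coeff_C_mul, Polynomial.coeff_X_pow,
    Fin.val_inj]

namespace TruncRing

section CommRing

variable {F : Type} [CommRing F] {α : ℕ}

theorem mk_eq_mk_iff {p r : Polynomial F} :
    (Ideal.Quotient.mk _ p : TruncRing F α) = Ideal.Quotient.mk _ r ↔
      Polynomial.X ^ α ∣ p - r := by
  rw [Ideal.Quotient.mk_eq_mk_iff_sub_mem, Ideal.mem_span_singleton]

theorem mk_eq_zero_iff {p : Polynomial F} :
    (Ideal.Quotient.mk _ p : TruncRing F α) = 0 ↔ Polynomial.X ^ α ∣ p := by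
  rw [Ideal.Quotient.eq_zero_iff_mem, Ideal.mem_span_singleton]

theorem tvar_pow (k : ℕ) :
    tvar F α ^ k = Ideal.Quotient.mk _ ((Polynomial.X : Polynomial F) ^ k) := by
  simp [tvar]

theorem tvar_pow_self : tvar F α ^ α = 0 := by
  rw [tvar_pow, mk_eq_zero_iff]

theorem isNilpotent_tvar : IsNilpotent (tvar F α) := ⟨α, tvar_pow_self⟩

theorem tvar_pow_dvd_mk {k : ℕ} (hk : k ≤ α) {p : Polynomial F} :
    tvar F α ^ k ∣ Ideal.Quotient.mk _ p ↔ Polynomial.X ^ k ∣ p := by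
  rw [tvar_pow]
  constructor
  · rintro ⟨c, hc⟩
    obtain ⟨c, rfl⟩ := Ideal.Quotient.mk_surjective c
    rw [← map_mul, mk_eq_mk_iff] at hc
    have := (pow_dvd_pow _ hk).trans hc
    exact (dvd_iff_dvd_of_dvd_sub this).2 (dvd_mul_right _ _)
  · exact fun h => map_dvd _ h

/-- The annihilator of `t ^ k` is generated by `t ^ (α - k)`. -/
theorem tvar_pow_mul_eq_zero_iff {k : ℕ} (hk : k ≤ α) {r : TruncRing F α} :
    tvar F α ^ k * r = 0 ↔ tvar F α ^ (α - k) ∣ r := by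
  obtain ⟨p, rfl⟩ := Ideal.Quotient.mk_surjective r
  rw [tvar_pow_dvd_mk (Nat.sub_le _ _), tvar_pow, ← map_mul, mk_eq_zero_iff,
    Polynomial.X_pow_dvd_iff, Polynomial.X_pow_dvd_iff]
  constructor
  · intro h d hd
    have := h (d + k) (by omega)
    rwa [Polynomial.coeff_X_pow_mul] at this
  · intro h d hd
    rw [Polynomial.coeff_X_pow_mul']
    split_ifs with hkd
    · exact h _ (by omega)
    · rfl

/-- The element `∑ k, c k t ^ k`. -/
noncomputable def series (α : ℕ) (c : Fin α → F) : TruncRing F α :=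
  Ideal.Quotient.mk _ (polyOfCoeffs c)

theorem X_pow_dvd_polyOfCoeffs_sub {n : ℕ} {c d : Fin n → F} :
    Polynomial.X ^ n ∣ polyOfCoeffs c - polyOfCoeffs d ↔ c = d := by
  rw [Polynomial.X_pow_dvd_iff]
  constructor
  · intro h
    funext k
    have := h k k.2
    rwa [Polynomial.coeff_sub, coeff_polyOfCoeffs, coeff_polyOfCoeffs, sub_eq_zero] at this
  · rintro rfl
    simp

theorem X_pow_dvd_sub_polyOfCoeffs (n : ℕ) (p : Polynomial F) :
    Polynomial.X ^ n ∣ p - polyOfCoeffs (fun k : Fin n => p.coeff k) := by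
  rw [Polynomial.X_pow_dvd_iff]
  intro d hd
  rw [Polynomial.coeff_sub, sub_eq_zero]
  exact (coeff_polyOfCoeffs (fun k : Fin n => p.coeff k) ⟨d, hd⟩).symm

theorem series_bijective : Function.Bijective (series (F := F) α) := by
  constructor
  · intro c d h
    exact X_pow_dvd_polyOfCoeffs_sub.1 (mk_eq_mk_iff.1 h)
  · intro r
    obtain ⟨p, rfl⟩ := Ideal.Quotient.mk_surjective r
    exact ⟨_, (mk_eq_mk_iff.2 (X_pow_dvd_sub_polyOfCoeffs α p)).symm⟩

instance [Finite F] : Finite (TruncRing F α) := Finite.of_surjective _ series_bijective.2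

theorem card_eq [Finite F] : Nat.card (TruncRing F α) = Nat.card F ^ α := by
  rw [← Nat.card_eq_of_bijective _ (series_bijective (F := F) (α := α)), Nat.card_fun]
  simp

theorem card_tvar_pow_dvd [Finite F] {k : ℕ} (hk : k ≤ α) :
    Nat.card {r : TruncRing F α // tvar F α ^ k ∣ r} = Nat.card F ^ (α - k) := by
  let f : (Fin (α - k) → F) → {r : TruncRing F α // tvar F α ^ k ∣ r} := fun c =>
    ⟨tvar F α ^ k * Ideal.Quotient.mk _ (polyOfCoeffs c), dvd_mul_right _ _⟩
  have hf : Function.Bijective f := by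
    constructor
    · intro c d h
      have h' := congrArg Subtype.val h
      simp only [f] at h'
      rw [← sub_eq_zero, ← mul_sub, tvar_pow_mul_eq_zero_iff hk, ← map_sub,
        tvar_pow_dvd_mk (Nat.sub_le _ _)] at h'
      exact X_pow_dvd_polyOfCoeffs_sub.1 h'
    · rintro ⟨_, s, rfl⟩
      obtain ⟨p, rfl⟩ := Ideal.Quotient.mk_surjective s
      refine ⟨fun j => p.coeff j, Subtype.ext ?_⟩
      simp only [f]
      rw [eq_comm, ← sub_eq_zero, ← mul_sub, tvar_pow_mul_eq_zero_iff hk, ← map_sub,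
        tvar_pow_dvd_mk (Nat.sub_le _ _)]
      exact X_pow_dvd_sub_polyOfCoeffs (α - k) p
  rw [← Nat.card_eq_of_bijective _ hf, Nat.card_fun]
  simp

/-- Reduction modulo `t`. -/
noncomputable def residue (F : Type) [CommRing F] {α : ℕ} (hα : α ≠ 0) : TruncRing F α →+* F :=
  Ideal.Quotient.lift _ Polynomial.constantCoeff (by
    intro a ha
    rw [Ideal.mem_span_singleton] at ha
    obtain ⟨c, rfl⟩ := ha
    simp [hα.symm])

theorem residue_mk (hα : α ≠ 0) (p : Polynomial F) :
    residue F hα (Ideal.Quotient.mk _ p) = p.coeff 0 := rfl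

@[simp] theorem residue_tvar (hα : α ≠ 0) : residue F hα (tvar F α) = 0 := by
  simp [tvar, residue_mk]

@[simp] theorem residue_algebraMap (hα : α ≠ 0) (a : F) :
    residue F hα (algebraMap F (TruncRing F α) a) = a :=
  (residue_mk hα (Polynomial.C a)).trans (by simp)

theorem residue_eq_zero_iff (hα : α ≠ 0) {r : TruncRing F α} :
    residue F hα r = 0 ↔ tvar F α ∣ r := by
  obtain ⟨p, rfl⟩ := Ideal.Quotient.mk_surjective r
  have := tvar_pow_dvd_mk (α := α) (k := 1) (by omega) (p := p)
  rw [pow_one, pow_one] at this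
  rw [this, residue_mk, Polynomial.X_dvd_iff]

end CommRing

section Field

variable {F : Type} [Field F] {α : ℕ}

theorem isUnit_iff (hα : α ≠ 0) {r : TruncRing F α} : IsUnit r ↔ residue F hα r ≠ 0 := by
  constructor
  · intro h
    exact (h.map (residue F hα)).ne_zero
  · intro h
    have h1 : tvar F α ∣ r - algebraMap F _ (residue F hα r) := by
      rw [← residue_eq_zero_iff hα]
      simp
    obtain ⟨s, hs⟩ := h1
    have h2 : IsUnit (algebraMap F (TruncRing F α) (residue F hα r)) :=
      (isUnit_iff_ne_zero.2 h).map _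
    have h3 : IsNilpotent (tvar F α * s) := (Commute.all _ _).isNilpotent_mul_right isNilpotent_tvar
    have := h3.isUnit_add_left_of_commute h2 (Commute.all _ _)
    rw [← hs] at this
    simpa using this

theorem not_isUnit_iff (hα : α ≠ 0) {r : TruncRing F α} : ¬ IsUnit r ↔ tvar F α ∣ r := by
  rw [isUnit_iff hα, not_not, residue_eq_zero_iff]

/-- A family of elements is zero, or a power of `t` times a family with a unit member. -/
theorem exists_eq_tvar_pow_mul (hα : α ≠ 0) {ι : Type} (w : ι → TruncRing F α) (hw : w ≠ 0) :
    ∃ k < α, ∃ w' : ι → TruncRing F α, (∀ i, w i = tvar F α ^ k * w' i) ∧ ∃ i, IsUnit (w' i) := by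
  classical
  let Q : ℕ → Prop := fun k => ∀ i, tvar F α ^ k ∣ w i
  have h0 : Q 0 := fun i => by simp
  have hQ : Q (Nat.findGreatest Q α) := Nat.findGreatest_spec (Nat.zero_le α) h0
  have hlt : Nat.findGreatest Q α < α := by
    refine lt_of_le_of_ne (Nat.findGreatest_le _) fun h => hw ?_
    rw [h] at hQ
    funext i
    have := hQ i
    rwa [tvar_pow_self, zero_dvd_iff] at this
  choose w' hw' using hQ
  refine ⟨_, hlt, w', hw', ?_⟩
  by_contra! hcon
  have : Q (Nat.findGreatest Q α + 1) := fun i => by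
    rw [hw' i, pow_succ]
    exact mul_dvd_mul_left _ ((not_isUnit_iff hα).1 (hcon i))
  have hle := Nat.le_findGreatest (Nat.succ_le_of_lt hlt) this
  omega

theorem card_isUnit [Finite F] (hα : α ≠ 0) :
    Nat.card {r : TruncRing F α // IsUnit r} = (Nat.card F - 1) * Nat.card F ^ (α - 1) := by
  classical
  have h1 := Nat.card_congr (Equiv.sumCompl (fun r : TruncRing F α => IsUnit r))
  rw [Nat.card_sum, card_eq] at h1
  have h2 : Nat.card {r : TruncRing F α // ¬ IsUnit r} = Nat.card F ^ (α - 1) := by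
    rw [← card_tvar_pow_dvd (F := F) (α := α) (k := 1) (by omega)]
    exact Nat.card_congr (Equiv.subtypeEquivRight fun r => by rw [not_isUnit_iff hα, pow_one])
  rw [h2] at h1
  obtain ⟨n, rfl⟩ := Nat.exists_eq_succ_of_ne_zero hα
  simp only [Nat.succ_eq_add_one, Nat.add_sub_cancel] at h1 ⊢
  rw [Nat.sub_mul, one_mul, ← pow_succ']
  omega

end Field

section Map

variable {F K : Type} [Field F] [Field K] {α : ℕ} (φ : F →+* K)

theorem truncMap_mk (p : Polynomial F) :
    truncMap φ α (Ideal.Quotient.mk _ p) = Ideal.Quotient.mk _ (p.map φ) := rfl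

@[simp] theorem truncMap_tvar : truncMap φ α (tvar F α) = tvar K α := by
  simp [tvar, truncMap_mk]

theorem truncMap_series (c : Fin α → F) : truncMap φ α (series α c) = series α (φ ∘ c) := by
  rw [series, truncMap_mk]
  simp [series, polyOfCoeffs, Polynomial.map_sum]

theorem truncMap_injective : Function.Injective (truncMap φ α) := by
  intro a b h
  obtain ⟨c, rfl⟩ := series_bijective.2 a
  obtain ⟨d, rfl⟩ := series_bijective.2 b
  rw [truncMap_series, truncMap_series] at h
  rw [(φ.injective.comp_left) (series_bijective.1 h)]

theorem residue_truncMap (hα : α ≠ 0) (r : TruncRing F α) :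
    residue K hα (truncMap φ α r) = φ (residue F hα r) := by
  obtain ⟨p, rfl⟩ := Ideal.Quotient.mk_surjective r
  simp [truncMap_mk, residue_mk]

end Map

end TruncRing

/-- The ring of `2 × 2` matrices. -/
abbrev Mat2 (R : Type) : Type := Matrix (Fin 2) (Fin 2) R

namespace Mat2

section CommRing

variable {R : Type} [CommRing R]

/-- The coordinates of a `2 × 2` matrix modulo scalar matrices. -/
def offScalar (m : Mat2 R) : Fin 3 → R := ![m 0 0 - m 1 1, m 0 1, m 1 0]

/-- A `2 × 2` matrix is given by its lower right entry and its class modulo scalars. -/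
def offScalarEquiv (R : Type) [CommRing R] : Mat2 R ≃ R × (Fin 3 → R) where
  toFun m := (m 1 1, offScalar m)
  invFun p := !![p.2 0 + p.1, p.2 1; p.2 2, p.1]
  left_inv m := by
    ext i j
    fin_cases i <;> fin_cases j <;> simp [offScalar]
  right_inv p := by
    refine Prod.ext (by simp) ?_
    funext i
    fin_cases i <;> simp [offScalar]

theorem mul_comm_iff (m z : Mat2 R) :
    m * z = z * m ↔
      ∀ i j, offScalar m i * offScalar z j = offScalar m j * offScalar z i := by
  constructor
  · intro h
    have h00 := congrFun (congrFun h 0) 0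
    have h01 := congrFun (congrFun h 0) 1
    have h10 := congrFun (congrFun h 1) 0
    simp only [Matrix.mul_apply, Fin.sum_univ_two] at h00 h01 h10
    intro i j
    fin_cases i <;> fin_cases j <;> simp [offScalar] <;> first
        | linear_combination h00
        | linear_combination -h00
        | linear_combination h01
        | linear_combination -h01
        | linear_combination h10
        | linear_combination -h10
  · intro h
    have h01 := h 0 1
    have h02 := h 0 2
    have h12 := h 1 2
    simp only [offScalar, Matrix.cons_val] at h01 h02 h12
    ext i j
    fin_cases i <;> fin_cases j <;> simp [Matrix.mul_apply, Fin.sum_univ_two] <;> first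
        | linear_combination h12
        | linear_combination -h12
        | linear_combination h01
        | linear_combination -h01
        | linear_combination h02
        | linear_combination -h02

theorem isUnit_iff_det (m : Mat2 R) : IsUnit m ↔ IsUnit (m.det) :=
  Matrix.isUnit_iff_isUnit_det m

end CommRing

end Mat2

namespace TruncRing

variable {F : Type} [Field F] {α : ℕ}

theorem exists_level (hα : α ≠ 0) {ι : Type} [Nonempty ι] (w : ι → TruncRing F α) :
    ∃ k ≤ α, ∃ w' : ι → TruncRing F α, (∀ i, w i = tvar F α ^ k * w' i) ∧ ∃ i, IsUnit (w' i) := by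
  by_cases hw : w = 0
  · refine ⟨α, le_rfl, fun _ => 1, fun i => ?_, Classical.arbitrary ι, isUnit_one⟩
    simp [hw, tvar_pow_self]
  · obtain ⟨k, hk, h⟩ := exists_eq_tvar_pow_mul hα w hw
    exact ⟨k, hk.le, h⟩

theorem tvar_pow_dvd_iff_le (hα : α ≠ 0) {ι : Type} {w' : ι → TruncRing F α} {i₀ : ι}
    (h : IsUnit (w' i₀)) {j k : ℕ} (hj : j ≤ α) :
    (∀ i, tvar F α ^ j ∣ tvar F α ^ k * w' i) ↔ j ≤ k := by
  constructor
  · intro hd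
    by_contra! hlt
    obtain ⟨s, hs⟩ := hd i₀
    have h1 : tvar F α ^ k * (w' i₀ - tvar F α ^ (j - k) * s) = 0 := by
      rw [mul_sub, ← mul_assoc, ← pow_add, Nat.add_sub_cancel' hlt.le, hs, sub_self]
    rw [tvar_pow_mul_eq_zero_iff (by omega)] at h1
    have h2 : tvar F α ∣ w' i₀ - tvar F α ^ (j - k) * s :=
      (dvd_pow_self _ (by omega)).trans h1
    have h3 : tvar F α ∣ tvar F α ^ (j - k) * s :=
      (dvd_pow_self _ (by omega)).mul_right _
    exact (not_isUnit_iff hα).2 ((dvd_iff_dvd_of_dvd_sub h2).2 h3) h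
  · intro hle i
    exact (pow_dvd_pow _ hle).mul_right _

/-- The number of vectors proportional to `t ^ k w'`, for `w'` unimodular. -/
theorem card_proportional [Finite F] {ι : Type} [Fintype ι] {w' : ι → TruncRing F α}
    {j₀ : ι} (h : IsUnit (w' j₀)) {k : ℕ} (hk : k ≤ α) :
    Nat.card {v : ι → TruncRing F α // ∀ i j,
      tvar F α ^ k * w' i * v j = tvar F α ^ k * w' j * v i} =
      Nat.card F ^ α * (Nat.card F ^ k) ^ (Fintype.card ι - 1) := by
  classical
  obtain ⟨u, hu⟩ := h
  let B := {s : TruncRing F α // tvar F α ^ (α - k) ∣ s}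
  have key : ∀ v : ι → TruncRing F α,
      (∀ i j, tvar F α ^ k * w' i * v j = tvar F α ^ k * w' j * v i) ↔
      ∀ i, tvar F α ^ (α - k) ∣ v i - w' i * ↑u⁻¹ * v j₀ := by
    intro v
    constructor
    · intro hv i
      rw [← tvar_pow_mul_eq_zero_iff hk]
      have h1 := hv j₀ i
      rw [← hu] at h1
      have h2 : (u : TruncRing F α) * ↑u⁻¹ = 1 := u.mul_inv
      linear_combination (↑u⁻¹ : TruncRing F α) * h1 - tvar F α ^ k * v i * h2
    · intro hv i j
      have h1 := (tvar_pow_mul_eq_zero_iff hk).2 (hv i)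
      have h2 := (tvar_pow_mul_eq_zero_iff hk).2 (hv j)
      linear_combination w' i * h2 - w' j * h1
  let e : {v : ι → TruncRing F α // ∀ i j,
      tvar F α ^ k * w' i * v j = tvar F α ^ k * w' j * v i} ≃
      TruncRing F α × ({i : ι // i ≠ j₀} → B) :=
    { toFun := fun v => (v.1 j₀, fun i => ⟨v.1 i - w' i * ↑u⁻¹ * v.1 j₀, (key v.1).1 v.2 i⟩)
      invFun := fun p => ⟨fun i => if hi : i = j₀ then p.1 else
          (p.2 ⟨i, hi⟩).1 + w' i * ↑u⁻¹ * p.1, by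
        rw [key]
        intro i
        by_cases hi : i = j₀
        · subst hi
          simp [← hu]
        · simpa [hi] using (p.2 ⟨i, hi⟩).2⟩
      left_inv := by
        rintro ⟨v, hv⟩
        ext i
        by_cases hi : i = j₀
        · simp [hi]
        · simp [hi]
      right_inv := by
        rintro ⟨a, s⟩
        refine Prod.ext (by simp) ?_
        funext ⟨i, hi⟩
        simp [hi] }
  rw [Nat.card_congr e, Nat.card_prod, card_eq, Nat.card_fun, card_tvar_pow_dvd (Nat.sub_le _ _),
    Nat.sub_sub_self hk, Nat.card_eq_fintype_card (α := {i : ι // i ≠ j₀}),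
    Fintype.card_subtype_compl, Fintype.card_subtype_eq]

/-- The size of the centralizer of a `2 × 2` matrix. -/
theorem card_centralizer [Finite F] {m : Mat2 (TruncRing F α)} {w' : Fin 3 → TruncRing F α}
    {j₀ : Fin 3} (h : IsUnit (w' j₀)) {k : ℕ} (hk : k ≤ α)
    (hm : ∀ i, m.offScalar i = tvar F α ^ k * w' i) :
    Nat.card {z : Mat2 (TruncRing F α) // m * z = z * m} = Nat.card F ^ (2 * α + 2 * k) := by
  have e : {z : Mat2 (TruncRing F α) // m * z = z * m} ≃
      TruncRing F α × {v : Fin 3 → TruncRing F α // ∀ i j,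
      tvar F α ^ k * w' i * v j = tvar F α ^ k * w' j * v i} :=
    ((Mat2.offScalarEquiv _).subtypeEquiv (q := fun p => ∀ i j,
      tvar F α ^ k * w' i * p.2 j = tvar F α ^ k * w' j * p.2 i) fun z => by
        rw [Mat2.mul_comm_iff]
        simp only [hm]
        rfl).trans
    { toFun := fun p => (p.1.1, ⟨p.1.2, p.2⟩)
      invFun := fun p => ⟨(p.1, p.2.1), p.2.2⟩
      left_inv := fun _ => rfl
      right_inv := fun _ => rfl }
  rw [Nat.card_congr e, Nat.card_prod, card_proportional h hk, card_eq, Fintype.card_fin]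
  ring

/-- The number of invertible matrices that are scalar modulo `t ^ k`. -/
theorem card_units_scalar_mod [Finite F] (hα : α ≠ 0) {k : ℕ} (hk : k ≤ α) (hk0 : k ≠ 0) :
    Nat.card {P : (Mat2 (TruncRing F α))ˣ // ∀ i, tvar F α ^ k ∣ P.1.offScalar i} =
      (Nat.card F - 1) * Nat.card F ^ (α - 1) * (Nat.card F ^ (α - k)) ^ 3 := by
  have key : ∀ m : Mat2 (TruncRing F α), (∀ i, tvar F α ^ k ∣ m.offScalar i) →
      (IsUnit m ↔ IsUnit (m 1 1)) := by
    intro m hm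
    have h1 : ∀ i, residue F hα (m.offScalar i) = 0 := fun i =>
      (residue_eq_zero_iff hα).2 ((dvd_pow_self _ hk0).trans (hm i))
    have h00 := h1 0
    have h01 := h1 1
    simp only [Mat2.offScalar, Matrix.cons_val, map_sub, sub_eq_zero] at h00 h01
    rw [Mat2.isUnit_iff_det, isUnit_iff hα, isUnit_iff hα, Matrix.det_fin_two]
    simp [h00, h01]
  let e₁ : {P : (Mat2 (TruncRing F α))ˣ // ∀ i, tvar F α ^ k ∣ P.1.offScalar i} ≃
      {m : Mat2 (TruncRing F α) // IsUnit (m 1 1) ∧ ∀ i, tvar F α ^ k ∣ m.offScalar i} :=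
    { toFun := fun P => ⟨P.1.1, (key _ P.2).1 P.1.isUnit, P.2⟩
      invFun := fun m => ⟨((key _ m.2.2).2 m.2.1).unit, m.2.2⟩
      left_inv := fun P => Subtype.ext (Units.ext rfl)
      right_inv := fun m => rfl }
  let e₂ : {m : Mat2 (TruncRing F α) // IsUnit (m 1 1) ∧ ∀ i, tvar F α ^ k ∣ m.offScalar i} ≃
      {r : TruncRing F α // IsUnit r} × (Fin 3 → {r : TruncRing F α // tvar F α ^ k ∣ r}) :=
    ((Mat2.offScalarEquiv _).subtypeEquiv
      (q := fun p => IsUnit p.1 ∧ ∀ i, tvar F α ^ k ∣ p.2 i) fun z => Iff.rfl).trans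
    { toFun := fun p => (⟨p.1.1, p.2.1⟩, fun i => ⟨p.1.2 i, p.2.2 i⟩)
      invFun := fun p => ⟨(p.1.1, fun i => (p.2 i).1), p.1.2, fun i => (p.2 i).2⟩
      left_inv := fun _ => rfl
      right_inv := fun _ => rfl }
  rw [Nat.card_congr (e₁.trans e₂), Nat.card_prod, card_isUnit hα, Nat.card_fun,
    card_tvar_pow_dvd hk]
  simp

theorem card_units_mat2 [Fintype F] (hα : α ≠ 0) :
    Nat.card (Mat2 (TruncRing F α))ˣ =
      (Nat.card F ^ 2 - 1) * (Nat.card F ^ 2 - Nat.card F) * (Nat.card F ^ (α - 1)) ^ 4 := by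
  let B := {s : TruncRing F α // tvar F α ^ 1 ∣ s}
  have key : ∀ m : Mat2 (TruncRing F α), IsUnit m ↔ IsUnit (m.map (residue F hα)) := by
    intro m
    rw [Mat2.isUnit_iff_det, Mat2.isUnit_iff_det, isUnit_iff hα, isUnit_iff_ne_zero,
      RingHom.map_det]
    rfl
  let e : (Mat2 (TruncRing F α))ˣ ≃ (Mat2 F)ˣ × (Fin 2 → Fin 2 → B) :=
    { toFun := fun P => (((key _).1 P.isUnit).unit, fun i j =>
        ⟨P.1 i j - algebraMap F _ (residue F hα (P.1 i j)), by
          rw [pow_one, ← residue_eq_zero_iff hα]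
          simp⟩)
      invFun := fun p => ((key (Matrix.of fun i j =>
          algebraMap F (TruncRing F α) (p.1.1 i j) + (p.2 i j).1)).2 (by
        have : (Matrix.of fun i j =>
            algebraMap F (TruncRing F α) (p.1.1 i j) + (p.2 i j).1).map (residue F hα) = p.1.1 := by
          ext i j
          have := (residue_eq_zero_iff hα).2 (by simpa using (p.2 i j).2)
          simp [this]
        rw [this]
        exact p.1.isUnit)).unit
      left_inv := by
        intro P
        ext i j
        simp
      right_inv := by
        rintro ⟨Q, s⟩
        have h : ∀ i j, residue F hα (s i j).1 = 0 := fun i j =>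
          (residue_eq_zero_iff hα).2 (by simpa using (s i j).2)
        refine Prod.ext (Units.ext ?_) ?_
        · ext i j
          simp [h]
        · funext i j
          simp [h] }
  have hGL := Matrix.card_GL_field (𝔽 := F) 2
  rw [Fin.prod_univ_two] at hGL
  have hGL' : Nat.card (Mat2 F)ˣ = (Nat.card F ^ 2 - 1) * (Nat.card F ^ 2 - Nat.card F) := by
    rw [Nat.card_eq_fintype_card (α := F)]
    simpa using hGL
  rw [Nat.card_congr e, Nat.card_prod, hGL', Nat.card_fun, Nat.card_fun,
    card_tvar_pow_dvd (by omega)]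
  simp only [Nat.card_eq_fintype_card, Fintype.card_fin]
  ring

end TruncRing

/-- Simultaneous conjugacy of tuples of `2 × 2` matrices. -/
def SimConj {R : Type} [CommRing R] {ι : Type} (x y : ι → Mat2 R) : Prop :=
  ∃ P : (Mat2 R)ˣ, ∀ i, y i = (P : Mat2 R) * x i * ((P⁻¹ : (Mat2 R)ˣ) : Mat2 R)

namespace SimConj

variable {R S : Type} [CommRing R] [CommRing S] {ι κ : Type}

theorem refl (x : ι → Mat2 R) : SimConj x x := ⟨1, fun i => by simp⟩

theorem symm {x y : ι → Mat2 R} (h : SimConj x y) : SimConj y x := by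
  obtain ⟨P, hP⟩ := h
  refine ⟨P⁻¹, fun i => ?_⟩
  rw [hP i]
  simp [mul_assoc]

theorem trans {x y z : ι → Mat2 R} (h : SimConj x y) (h' : SimConj y z) : SimConj x z := by
  obtain ⟨P, hP⟩ := h
  obtain ⟨Q, hQ⟩ := h'
  refine ⟨Q * P, fun i => ?_⟩
  rw [hQ i, hP i]
  simp [mul_assoc]

theorem map (φ : R →+* S) {x y : ι → Mat2 R} (h : SimConj x y) :
    SimConj (fun i => (x i).map φ) (fun i => (y i).map φ) := by
  obtain ⟨P, hP⟩ := h
  refine ⟨Units.map (φ.mapMatrix : Mat2 R →+* Mat2 S).toMonoidHom P, fun i => ?_⟩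
  have := congrArg (φ.mapMatrix : Mat2 R →+* Mat2 S) (hP i)
  rw [map_mul, map_mul] at this
  exact this

theorem comp {x y : ι → Mat2 R} (h : SimConj x y) (f : κ → ι) : SimConj (x ∘ f) (y ∘ f) := by
  obtain ⟨P, hP⟩ := h
  exact ⟨P, fun i => hP (f i)⟩

theorem sum_smul [Fintype κ] {x y : κ × ι → Mat2 R} (h : SimConj x y) (c : κ → R) :
    SimConj (fun i => ∑ k, c k • x (k, i)) (fun i => ∑ k, c k • y (k, i)) := by
  obtain ⟨P, hP⟩ := h
  refine ⟨P, fun i => ?_⟩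
  simp only [hP, Finset.mul_sum, Finset.sum_mul, Matrix.mul_smul, Matrix.smul_mul]

theorem equivalence (R : Type) [CommRing R] (ι : Type) :
    Equivalence (SimConj : (ι → Mat2 R) → (ι → Mat2 R) → Prop) :=
  ⟨refl, symm, trans⟩

/-- Burnside's lemma for simultaneous conjugation. -/
theorem card_quot_mul_card_units [Finite R] {g : ℕ} :
    Nat.card (Quot (SimConj : (Fin g → Mat2 R) → (Fin g → Mat2 R) → Prop)) *
        Nat.card (Mat2 R)ˣ =
      ∑ᶠ P : (Mat2 R)ˣ, Nat.card {z : Mat2 R // P.1 * z = z * P.1} ^ g := by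
  classical
  have := Fintype.ofFinite R
  have hfix : ∀ P : ConjAct (Mat2 R)ˣ, Fintype (MulAction.fixedBy (Fin g → Mat2 R) P) :=
    fun P => Fintype.ofFinite _
  have horb : Fintype (MulAction.orbitRel.Quotient (ConjAct (Mat2 R)ˣ) (Fin g → Mat2 R)) :=
    Fintype.ofFinite _
  have hB := MulAction.sum_card_fixedBy_eq_card_orbits_mul_card_group
    (ConjAct (Mat2 R)ˣ) (Fin g → Mat2 R)
  have h1 : Fintype.card (MulAction.orbitRel.Quotient (ConjAct (Mat2 R)ˣ) (Fin g → Mat2 R)) =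
      Nat.card (Quot (SimConj : (Fin g → Mat2 R) → (Fin g → Mat2 R) → Prop)) := by
    rw [← Nat.card_eq_fintype_card]
    refine Nat.card_congr (Quot.congrRight fun x y => ?_)
    constructor
    · rintro ⟨P, hP⟩
      refine symm ⟨ConjAct.ofConjAct P, fun i => ?_⟩
      rw [← hP]
      exact ConjAct.units_smul_def P (y i)
    · intro h
      obtain ⟨P, hP⟩ := symm h
      refine ⟨ConjAct.toConjAct P, ?_⟩
      funext i
      rw [hP i]
      exact ConjAct.units_smul_def _ (y i)
  have h2 : Fintype.card (ConjAct (Mat2 R)ˣ) = Nat.card (Mat2 R)ˣ := by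
    rw [← Nat.card_eq_fintype_card]
    exact Nat.card_congr ConjAct.ofConjAct.toEquiv
  rw [h1, h2] at hB
  rw [← hB, finsum_eq_sum_of_fintype]
  refine Fintype.sum_equiv ConjAct.ofConjAct.toEquiv _ _ fun P => ?_
  have h3 : ∀ x : Fin g → Mat2 R, x ∈ MulAction.fixedBy (Fin g → Mat2 R) P ↔
      ∀ i, (ConjAct.ofConjAct P).1 * x i = x i * (ConjAct.ofConjAct P).1 := by
    intro x
    rw [MulAction.mem_fixedBy, funext_iff]
    refine forall_congr' fun i => ?_
    rw [Pi.smul_apply, ConjAct.units_smul_def, Units.mul_inv_eq_iff_eq_mul]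
  have e : MulAction.fixedBy (Fin g → Mat2 R) P ≃
      (Fin g → {z : Mat2 R // (ConjAct.ofConjAct P).1 * z = z * (ConjAct.ofConjAct P).1}) :=
    { toFun := fun x i => ⟨x.1 i, (h3 x.1).1 x.2 i⟩
      invFun := fun x => ⟨fun i => (x i).1, (h3 _).2 fun i => (x i).2⟩
      left_inv := fun _ => rfl
      right_inv := fun _ => rfl }
  rw [← Nat.card_eq_fintype_card, Nat.card_congr e, Nat.card_fun, Nat.card_fin]
  rfl

end SimConj

namespace TruncRing

variable {F : Type} [Field F] {α : ℕ}

open scoped Classical in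
theorem card_centralizer_pow [Finite F] (hα : α ≠ 0) (g : ℕ) (m : Mat2 (TruncRing F α)) :
    ((Nat.card {z : Mat2 (TruncRing F α) // m * z = z * m} ^ g : ℕ) : ℚ) =
      (Nat.card F : ℚ) ^ (2 * α * g) + ∑ j ∈ Finset.range α,
        if ∀ i, tvar F α ^ (j + 1) ∣ m.offScalar i then
          (Nat.card F : ℚ) ^ ((2 * α + 2 * (j + 1)) * g) - (Nat.card F : ℚ) ^ ((2 * α + 2 * j) * g)
        else 0 := by
  obtain ⟨k, hk, w', hw', j₀, hj₀⟩ := exists_level hα m.offScalar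
  rw [card_centralizer hj₀ hk hw', ← Finset.sum_filter]
  have : (Finset.range α).filter (fun j => ∀ i, tvar F α ^ (j + 1) ∣ m.offScalar i) =
      Finset.range k := by
    ext j
    simp only [Finset.mem_filter, Finset.mem_range, hw']
    constructor
    · rintro ⟨hj, h⟩
      exact (tvar_pow_dvd_iff_le hα hj₀ (by omega)).1 h
    · intro h
      exact ⟨by omega, (tvar_pow_dvd_iff_le hα hj₀ (by omega)).2 h⟩
  rw [this, Finset.sum_range_sub (fun j => (Nat.card F : ℚ) ^ ((2 * α + 2 * j) * g))]
  push_cast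
  rw [← pow_mul]
  ring

/-- The number of conjugacy classes of all tuples. -/
theorem card_quot_simConj [Fintype F] (hα : α ≠ 0) (g : ℕ) :
    (Nat.card (Quot (SimConj :
      (Fin g → Mat2 (TruncRing F α)) → (Fin g → Mat2 (TruncRing F α)) → Prop)) : ℚ) =
      (Fintype.card F : ℚ) ^ (2 * α * g)
      + (Fintype.card F : ℚ) ^ (2 * (α : ℤ) * (g : ℤ) - 1)
          * ((Fintype.card F : ℚ) ^ (2 * (g : ℤ)) - 1)
          * ((Fintype.card F : ℚ) ^ ((α : ℤ) * (2 * (g : ℤ) - 3)) - 1)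
        / (((Fintype.card F : ℚ) ^ (2 : ℤ) - 1)
          * ((Fintype.card F : ℚ) ^ (2 * (g : ℤ) - 3) - 1)) := by
  classical
  have hB := SimConj.card_quot_mul_card_units (R := TruncRing F α) (g := g)
  have := Fintype.ofFinite (Mat2 (TruncRing F α))ˣ
  rw [finsum_eq_sum_of_fintype] at hB
  replace hB := congrArg (Nat.cast : ℕ → ℚ) hB
  rw [Nat.cast_sum] at hB
  simp only [card_centralizer_pow hα] at hB
  rw [Finset.sum_add_distrib, Finset.sum_comm, Finset.sum_const, Finset.card_univ,
    ← Nat.card_eq_fintype_card] at hB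
  have h1 : ∀ j ∈ Finset.range α,
      (∑ P : (Mat2 (TruncRing F α))ˣ, if ∀ i, tvar F α ^ (j + 1) ∣ P.1.offScalar i then
          (Nat.card F : ℚ) ^ ((2 * α + 2 * (j + 1)) * g) - (Nat.card F : ℚ) ^ ((2 * α + 2 * j) * g)
        else 0) =
      (((Nat.card F - 1) * Nat.card F ^ (α - 1) * (Nat.card F ^ (α - (j + 1))) ^ 3 : ℕ) : ℚ) *
      ((Nat.card F : ℚ) ^ ((2 * α + 2 * (j + 1)) * g)
        - (Nat.card F : ℚ) ^ ((2 * α + 2 * j) * g)) := by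
    intro j hj
    rw [← card_units_scalar_mod hα (Nat.succ_le_of_lt (Finset.mem_range.1 hj)) (by omega),
      ← Finset.sum_filter, Finset.sum_const, nsmul_eq_mul, ← Fintype.card_subtype,
      ← Nat.card_eq_fintype_card]
  rw [Finset.sum_congr rfl h1, Nat.cast_mul, card_units_mat2 hα,
    Nat.card_eq_fintype_card (α := F)] at hB
  have hq : 1 < Fintype.card F := Fintype.one_lt_card
  have hq2 : (1 : ℚ) < (Fintype.card F : ℚ) := by exact_mod_cast hq
  generalize Fintype.card F = q at *
  generalize Nat.card (Quot _) = M at *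
  obtain ⟨n, rfl⟩ := Nat.exists_eq_succ_of_ne_zero hα
  have hc1 : ((q - 1 : ℕ) : ℚ) = q - 1 := by rw [Nat.cast_sub hq.le, Nat.cast_one]
  have hc2 : ((q ^ 2 - 1 : ℕ) : ℚ) = (q : ℚ) ^ 2 - 1 := by
    rw [Nat.cast_sub (Nat.one_le_pow _ _ (by omega))]
    push_cast
    rfl
  have hc3 : ((q ^ 2 - q : ℕ) : ℚ) = (q : ℚ) ^ 2 - q := by
    rw [Nat.cast_sub (Nat.le_self_pow (by norm_num) _)]
    push_cast
    rfl
  simp only [Nat.cast_mul, Nat.cast_pow, hc1, hc2, hc3, Nat.succ_eq_add_one, nsmul_eq_mul,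
    Nat.add_sub_cancel] at hB
  generalize (q : ℚ) = x at *
  have hx0 : x ≠ 0 := by positivity
  have h2 : ∀ j ∈ Finset.range (n + 1),
      (x - 1) * x ^ n * (x ^ (n + 1 - (j + 1))) ^ 3 *
        (x ^ ((2 * (n + 1) + 2 * (j + 1)) * g) - x ^ ((2 * (n + 1) + 2 * j) * g)) =
      ((x - 1) * x ^ (4 * n) * x ^ (2 * (n + 1) * g) * (x ^ (2 * g) - 1)) *
        (x ^ (2 * (g : ℤ) - 3)) ^ j := by
    intro j hj
    obtain ⟨d, rfl⟩ := Nat.exists_eq_add_of_le (Nat.lt_succ_iff.1 (Finset.mem_range.1 hj))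
    have e1 : (x ^ (2 * (g : ℤ) - 3)) ^ j = x ^ (2 * g * j) / x ^ (3 * j) := by
      rw [eq_div_iff (by positivity), ← zpow_natCast, ← zpow_mul, ← zpow_natCast x (3 * j),
        ← zpow_natCast x (2 * g * j), ← zpow_add₀ hx0]
      congr 1
      push_cast
      ring
    rw [e1, show j + d + 1 - (j + 1) = d by omega]
    field_simp
    ring
  rw [Finset.sum_congr rfl h2, ← Finset.mul_sum] at hB
  have hs : x ^ (2 * (g : ℤ) - 3) ≠ 1 := by
    intro h
    rw [zpow_eq_one_iff_right₀ (by positivity) hq2.ne'] at h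
    omega
  rw [geom_sum_eq hs, ← zpow_natCast (x ^ (2 * (g : ℤ) - 3)), ← zpow_mul] at hB
  have e2 : x ^ (2 * ((n.succ : ℕ) : ℤ) * (g : ℤ) - 1) = x ^ (2 * (n + 1) * g) / x := by
    rw [zpow_sub₀ hx0, zpow_one, ← zpow_natCast]
    congr 2
  have e3 : x ^ (2 * (g : ℤ)) = x ^ (2 * g) := by
    rw [← zpow_natCast]
    congr 1
  have e4 : (2 * (g : ℤ) - 3) * ((n + 1 : ℕ) : ℤ) = ((n.succ : ℕ) : ℤ) * (2 * (g : ℤ) - 3) := by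
    rw [mul_comm]
  rw [e4] at hB
  rw [e2, e3, show x ^ (2 : ℤ) = x ^ 2 from zpow_ofNat x 2]
  have hs' : x ^ (2 * (g : ℤ) - 3) - 1 ≠ 0 := sub_ne_zero.2 hs
  generalize x ^ (2 * (g : ℤ) - 3) = s at *
  generalize x ^ (((n.succ : ℕ) : ℤ) * (2 * (g : ℤ) - 3)) = S at *
  have hx1 : x - 1 ≠ 0 := by linarith
  have hx2 : x ^ 2 - 1 ≠ 0 := by nlinarith
  have hx3 : x ^ 2 - x ≠ 0 := by nlinarith
  have hG : (x ^ 2 - 1) * (x ^ 2 - x) * (x ^ n) ^ 4 ≠ 0 := by positivity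
  rw [← mul_left_inj' hG, hB]
  simp only [Nat.succ_eq_add_one]
  field_simp
  ring

end TruncRing

namespace Mat2

section CommRing

variable {R S : Type} [CommRing R] [CommRing S] {ι κ : Type}

/-- The companion matrix of `X ^ 2 - T X + D`. -/
def comp (T D : R) : Mat2 R := !![0, -D; 1, T]

/-- The discriminant of the characteristic polynomial. -/
def disc (m : Mat2 R) : R := (m 0 0 - m 1 1) ^ 2 + 4 * (m 0 1 * m 1 0)

theorem disc_eq (m : Mat2 R) : m.disc = m.trace ^ 2 - 4 * m.det := by
  rw [disc, Matrix.trace_fin_two, Matrix.det_fin_two]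
  ring

theorem disc_comp (T D : R) : (comp T D).disc = T ^ 2 - 4 * D := by
  simp [disc, comp]
  ring

theorem trace_conj (P : (Mat2 R)ˣ) (m : Mat2 R) :
    Matrix.trace (P.1 * m * (P⁻¹ : (Mat2 R)ˣ).1) = m.trace := by
  rw [Matrix.trace_mul_cycle]
  simp

theorem det_conj (P : (Mat2 R)ˣ) (m : Mat2 R) :
    Matrix.det (P.1 * m * (P⁻¹ : (Mat2 R)ˣ).1) = m.det := by
  rw [Matrix.det_mul, Matrix.det_mul, mul_right_comm, ← Matrix.det_mul, Units.mul_inv,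
    Matrix.det_one, one_mul]

theorem conj_pencil (P : (Mat2 R)ˣ) (u v : R) (C : Mat2 R) :
    P.1 * (u • (1 : Mat2 R) + v • C) * (P⁻¹ : (Mat2 R)ˣ).1 =
      u • (1 : Mat2 R) + v • (P.1 * C * (P⁻¹ : (Mat2 R)ˣ).1) := by
  rw [mul_add, add_mul, Matrix.mul_smul, Matrix.mul_smul, Matrix.smul_mul, Matrix.smul_mul,
    mul_one, Units.mul_inv]

theorem eq_pencil_of_pencil_eq {u : R} {v : Rˣ} {C B : Mat2 R}
    (h : u • (1 : Mat2 R) + (v : R) • C = B) :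
    C = (-(↑v⁻¹ * u) : R) • (1 : Mat2 R) + (↑v⁻¹ : R) • B := by
  rw [← h, smul_add, smul_smul, smul_smul, Units.inv_mul, one_smul, ← add_assoc, ← add_smul,
    neg_add_cancel, zero_smul, zero_add]

theorem map_comp (φ : R →+* S) (T D : R) :
    (comp T D : Matrix (Fin 2) (Fin 2) R).map φ = comp (φ T) (φ D) := by
  ext a b
  fin_cases a <;> fin_cases b <;> simp [comp]

theorem map_pencil (φ : R →+* S) (u v : R) (C : Mat2 R) :
    (u • (1 : Mat2 R) + v • C).map φ = φ u • (1 : Mat2 S) + φ v • C.map φ := by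
  ext a b
  fin_cases a <;> fin_cases b <;> simp

/-- All members of the family are combinations of `1` and `C`. -/
def InPencil (C : Mat2 R) (x : ι → Mat2 R) : Prop :=
  ∀ i, ∃ u v : R, x i = u • (1 : Mat2 R) + v • C

theorem InPencil.conj {C : Mat2 R} {x : ι → Mat2 R} (h : InPencil C x) (P : (Mat2 R)ˣ) :
    InPencil (P.1 * C * (P⁻¹ : (Mat2 R)ˣ).1) (fun i => P.1 * x i * (P⁻¹ : (Mat2 R)ˣ).1) := by
  intro i
  obtain ⟨u, v, hx⟩ := h i
  exact ⟨u, v, by simp only [hx, conj_pencil]⟩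

theorem InPencil.of_eq {C C' : Mat2 R} {x : ι → Mat2 R} (h : InPencil C x) {a b : R}
    (hC : C = a • (1 : Mat2 R) + b • C') : InPencil C' x := by
  intro i
  obtain ⟨u, v, hx⟩ := h i
  refine ⟨u + v * a, v * b, ?_⟩
  rw [hx, hC, smul_add, smul_smul, smul_smul, add_smul, add_assoc]

theorem InPencil.map {C : Mat2 R} {x : ι → Mat2 R} (h : InPencil C x) (φ : R →+* S) :
    InPencil (C.map φ) (fun i => (x i).map φ) := by
  intro i
  obtain ⟨u, v, hx⟩ := h i
  exact ⟨φ u, φ v, by simp only [hx, map_pencil]⟩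

theorem offScalar_pencil (u v : R) (C : Mat2 R) (j : Fin 3) :
    offScalar (u • (1 : Mat2 R) + v • C) j = v * offScalar C j := by
  fin_cases j <;> simp [offScalar]
  ring

theorem trace_pencil (u v : R) (C : Mat2 R) :
    Matrix.trace (u • (1 : Mat2 R) + v • C) = 2 * u + v * C.trace := by
  simp [Matrix.trace_fin_two]
  ring

theorem det_pencil (u v : R) (C : Mat2 R) :
    Matrix.det (u • (1 : Mat2 R) + v • C) = u ^ 2 + u * v * C.trace + v ^ 2 * C.det := by
  simp [Matrix.trace_fin_two, Matrix.det_fin_two]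
  ring

theorem eq_pencil_of_offScalar {m C : Mat2 R} {v : R}
    (h : ∀ j, offScalar m j = v * offScalar C j) :
    m = (m 1 1 - v * C 1 1) • (1 : Mat2 R) + v • C := by
  have h0 := h 0
  have h1 := h 1
  have h2 := h 2
  simp only [offScalar, Matrix.cons_val] at h0 h1 h2
  ext a b
  fin_cases a <;> fin_cases b <;> simp [h1, h2]
  linear_combination h0

theorem exists_pencil_of_simDiagonalizable {g : ℕ} {x : Fin g → Mat2 R}
    (h : SimDiagonalizable x) : ∃ E : Mat2 R, E.disc = 1 ∧ InPencil E x := by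
  obtain ⟨P, hP⟩ := h
  have h1 : InPencil !![1, 0; 0, 0] (fun i => P.1 * x i * (P⁻¹ : (Mat2 R)ˣ).1) := by
    intro i
    have h01 := hP i (show (0 : Fin 2) ≠ 1 by decide)
    have h10 := hP i (show (1 : Fin 2) ≠ 0 by decide)
    beta_reduce
    generalize P.1 * x i * (P⁻¹ : (Mat2 R)ˣ).1 = m at *
    refine ⟨m 1 1, m 0 0 - m 1 1, ?_⟩
    ext a b
    fin_cases a <;> fin_cases b <;> simp [h01, h10]
  have h2 := h1.conj P⁻¹
  have h3 : (fun i => (P⁻¹ : (Mat2 R)ˣ).1 * (P.1 * x i * (P⁻¹ : (Mat2 R)ˣ).1) *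
      (P⁻¹⁻¹ : (Mat2 R)ˣ).1) = x := by
    funext i
    rw [inv_inv, mul_assoc P.1, Units.inv_mul_cancel_left, Units.inv_mul_cancel_right]
  rw [h3] at h2
  refine ⟨_, ?_, h2⟩
  rw [disc_eq, trace_conj, det_conj]
  simp [Matrix.trace_fin_two, Matrix.det_fin_two]

theorem exists_conj_comp [IsLocalRing R] {m : Mat2 R} {j : Fin 3} (h : IsUnit (offScalar m j)) :
    ∃ P : (Mat2 R)ˣ, P.1 * m * (P⁻¹ : (Mat2 R)ˣ).1 = comp m.trace m.det := by
  suffices hS : ∃ S : Mat2 R, IsUnit S.det ∧ m * S = S * comp m.trace m.det by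
    obtain ⟨S, hS, h⟩ := hS
    obtain ⟨Q, rfl⟩ := (isUnit_iff_det S).2 hS
    refine ⟨Q⁻¹, ?_⟩
    rw [inv_inv, mul_assoc, h, ← mul_assoc, Units.inv_mul, one_mul]
  by_cases hb : IsUnit (m 0 1)
  · refine ⟨!![0, m 0 1; 1, m 1 1], by simpa [Matrix.det_fin_two] using hb, ?_⟩
    ext a b
    fin_cases a <;> fin_cases b <;>
      simp [comp, Matrix.mul_apply, Fin.sum_univ_two, Matrix.trace_fin_two, Matrix.det_fin_two] <;>
      ring
  by_cases hc : IsUnit (m 1 0)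
  · refine ⟨!![1, m 0 0; 0, m 1 0], by simpa [Matrix.det_fin_two] using hc, ?_⟩
    ext a b
    fin_cases a <;> fin_cases b <;>
      simp [comp, Matrix.mul_apply, Fin.sum_univ_two, Matrix.trace_fin_two, Matrix.det_fin_two] <;>
      ring
  refine ⟨!![1, m 0 0 + m 0 1; 1, m 1 0 + m 1 1], ?_, ?_⟩
  · have h0 : IsUnit (m 0 0 - m 1 1) := by
      fin_cases j
      · exact h
      · exact absurd h hb
      · exact absurd h hc
    by_contra hcon
    have hbc : m 1 0 - m 0 1 ∈ nonunits R :=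
      sub_eq_add_neg (m 1 0) _ ▸ IsLocalRing.nonunits_add hc (by simpa [mem_nonunits_iff] using hb)
    have := IsLocalRing.nonunits_add hbc
      (show -Matrix.det !![1, m 0 0 + m 0 1; 1, m 1 0 + m 1 1] ∈ nonunits R by
        rwa [mem_nonunits_iff, IsUnit.neg_iff])
    refine this ?_
    convert h0 using 1
    simp [Matrix.det_fin_two]
    ring
  · ext a b
    fin_cases a <;> fin_cases b <;>
      simp [comp, Matrix.mul_apply, Fin.sum_univ_two, Matrix.trace_fin_two, Matrix.det_fin_two] <;>
      ring

theorem exists_isUnit_offScalar [IsLocalRing R] {m : Mat2 R} (h : IsUnit m.disc) :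
    ∃ j, IsUnit (offScalar m j) := by
  by_contra! hcon
  have h0 : m 0 0 - m 1 1 ∈ nonunits R := hcon 0
  have h1 : m 0 1 ∈ nonunits R := hcon 1
  rw [← IsLocalRing.mem_maximalIdeal] at h0 h1
  have : m.disc ∈ IsLocalRing.maximalIdeal R :=
    Ideal.add_mem _ (Ideal.pow_mem_of_mem _ h0 2 (by norm_num))
      (Ideal.mul_mem_left _ _ (Ideal.mul_mem_right _ _ h1))
  exact (IsLocalRing.mem_maximalIdeal _).1 this h

end CommRing

end Mat2

namespace TruncRing

variable {F : Type} [Field F] {α : ℕ}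

open Mat2

theorem isLocalRing (hα : α ≠ 0) : IsLocalRing (TruncRing F α) := by
  have : Nontrivial (TruncRing F α) := (residue F hα).domain_nontrivial
  refine IsLocalRing.of_nonunits_add fun a b ha hb => ?_
  rw [mem_nonunits_iff, not_isUnit_iff hα] at *
  exact dvd_add ha hb

/-- A tuple diagonalizable over an extension is a family of combinations of `1` and a matrix
with unit discriminant. -/
theorem exists_pencil_of_simDiagonalizable_map (hα : α ≠ 0) {K : Type} [Field K] (φ : F →+* K)
    {g : ℕ} {x : Fin g → Mat2 (TruncRing F α)}
    (h : SimDiagonalizable fun i => (x i).map (truncMap φ α)) :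
    ∃ C : Mat2 (TruncRing F α), IsUnit C.disc ∧ InPencil C x := by
  obtain ⟨E, hE, hx⟩ := exists_pencil_of_simDiagonalizable h
  choose b c hbc using hx
  have hoff : ∀ i j, truncMap φ α (offScalar (x i) j) = c i * offScalar E j := by
    intro i j
    rw [← offScalar_pencil (b i), ← hbc]
    fin_cases j <;> simp [offScalar]
  by_cases hw : (fun p : Fin g × Fin 3 => offScalar (x p.1) p.2) = 0
  · refine ⟨!![1, 0; 0, 0], by simp [disc], fun i => ⟨_, 0, eq_pencil_of_offScalar fun j => ?_⟩⟩
    simpa using congrFun hw (i, j)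
  obtain ⟨k, hk, w', hw', ⟨i₀, j₀⟩, hu⟩ := exists_eq_tvar_pow_mul hα _ hw
  replace hw' : ∀ i j, offScalar (x i) j = tvar F α ^ k * w' (i, j) := fun i j => hw' (i, j)
  have hwK : ∀ i j, tvar K α ^ k * truncMap φ α (w' (i, j)) = c i * offScalar E j := by
    intro i j
    rw [← hoff, hw', map_mul, map_pow, truncMap_tvar]
  have hE' : offScalar E 0 ^ 2 + 4 * (offScalar E 1 * offScalar E 2) = 1 := hE
  let ω : Fin g → TruncRing K α := fun i =>
    truncMap φ α (w' (i, 0)) * offScalar E 0 + 4 * (truncMap φ α (w' (i, 1)) * offScalar E 2)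
  have hc : ∀ i, c i = tvar K α ^ k * ω i := by
    intro i
    linear_combination -(c i) * hE' - offScalar E 0 * hwK i 0 - 4 * offScalar E 2 * hwK i 1
  have hres : ∀ j, φ (residue F hα (w' (i₀, j))) =
      residue K hα (ω i₀) * residue K hα (offScalar E j) := by
    intro j
    have h1 : tvar K α ^ k * (truncMap φ α (w' (i₀, j)) - ω i₀ * offScalar E j) = 0 := by
      rw [mul_sub, hwK, hc]
      ring
    rw [tvar_pow_mul_eq_zero_iff hk.le] at h1
    have h2 := (residue_eq_zero_iff hα).2 ((dvd_pow_self _ (by omega)).trans h1)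
    rwa [map_sub, map_mul, residue_truncMap, sub_eq_zero] at h2
  have hω : residue K hα (ω i₀) ≠ 0 := by
    intro h0
    have := hres j₀
    rw [h0, zero_mul, map_eq_zero] at this
    exact (isUnit_iff hα).1 hu this
  refine ⟨!![w' (i₀, 0), w' (i₀, 1); w' (i₀, 2), 0], ?_, ?_⟩
  · rw [isUnit_iff hα]
    intro h0
    have h1 := congrArg φ h0
    simp only [disc, Matrix.of_apply, Matrix.cons_val, sub_zero, map_add, map_pow, map_mul, hres,
      map_zero, map_ofNat] at h1
    have h2 := congrArg (residue K hα) hE'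
    simp only [map_add, map_pow, map_mul, map_ofNat, map_one] at h2
    refine hω (pow_eq_zero_iff (two_ne_zero)|>.1 ?_)
    linear_combination h1 - (residue K hα (ω i₀)) ^ 2 * h2
  · obtain ⟨u, hu⟩ := hu
    intro i
    refine ⟨_, offScalar (x i) j₀ * ↑u⁻¹, eq_pencil_of_offScalar fun j => ?_⟩
    have h1 : offScalar !![w' (i₀, 0), w' (i₀, 1); w' (i₀, 2), 0] j = w' (i₀, j) := by
      fin_cases j <;> simp [offScalar]
    have h2 : offScalar (x i) j * u = offScalar (x i) j₀ * w' (i₀, j) := by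
      apply truncMap_injective φ
      rw [hu, map_mul, map_mul, hoff, hoff, hc]
      linear_combination ω i * offScalar E j * hwK i₀ j₀ - ω i * offScalar E j₀ * hwK i₀ j
    have h3 : (u : TruncRing F α) * ↑u⁻¹ = 1 := u.mul_inv
    rw [h1]
    linear_combination (↑u⁻¹ : TruncRing F α) * h2 - offScalar (x i) j * h3

/-- Lifting of separable quadratic polynomials along `t`. -/
theorem exists_quadratic_lift (hα : α ≠ 0) (T D : TruncRing F α)
    (h : residue F hα T ^ 2 - 4 * residue F hα D ≠ 0) :
    ∃ u v, IsUnit v ∧ 2 * u + v * T = algebraMap F _ (residue F hα T) ∧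
      u ^ 2 + u * v * T + v ^ 2 * D = algebraMap F _ (residue F hα D) := by
  have key : ∀ n : ℕ, ∃ u v, IsUnit v ∧ residue F hα u = 0 ∧ residue F hα v = 1 ∧
      tvar F α ^ (n + 1) ∣ algebraMap F _ (residue F hα T) - (2 * u + v * T) ∧
      tvar F α ^ (n + 1) ∣ algebraMap F _ (residue F hα D)
        - (u ^ 2 + u * v * T + v ^ 2 * D) := by
    intro n
    induction n with
    | zero =>
      refine ⟨0, 1, isUnit_one, map_zero _, map_one _, ?_, ?_⟩ <;>
      · rw [zero_add, pow_one, ← residue_eq_zero_iff hα]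
        simp
    | succ n ih =>
      obtain ⟨u, v, hv, hu0, hv1, ⟨τ, hτ⟩, ⟨δ, hδ⟩⟩ := ih
      obtain ⟨d, hd⟩ : IsUnit (4 * (u ^ 2 + u * v * T + v ^ 2 * D) - (2 * u + v * T) ^ 2) := by
        rw [isUnit_iff hα]
        simp only [map_sub, map_mul, map_add, map_pow, map_ofNat, hu0, hv1]
        intro h0
        apply h
        linear_combination -h0
      have hdd : (d : TruncRing F α) * ↑d⁻¹ = 1 := d.mul_inv
      rw [hd] at hdd
      let T₁ := 2 * u + v * T
      let D₁ := u ^ 2 + u * v * T + v ^ 2 * D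
      let a := (2 * D₁ * τ - T₁ * δ) * (↑d⁻¹ : TruncRing F α)
      let b := (2 * δ - T₁ * τ) * (↑d⁻¹ : TruncRing F α)
      have hb0 : residue F hα (tvar F α ^ (n + 1)) = 0 := by simp
      refine ⟨u + tvar F α ^ (n + 1) * (a + b * u), v + tvar F α ^ (n + 1) * (b * v), ?_, ?_, ?_,
        ⟨0, ?_⟩, ?_⟩
      · rw [isUnit_iff hα]
        simp only [map_add, map_mul, hb0, hv1]
        simp
      · simp only [map_add, map_mul, hb0, hu0]
        simp
      · simp only [map_add, map_mul, hb0, hv1]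
        simp
      · simp only [a, b, T₁, D₁]
        linear_combination hτ - tvar F α ^ (n + 1) * τ * hdd
      · have : tvar F α ^ (n + 1 + 1) ∣ tvar F α ^ (n + 1) * tvar F α ^ (n + 1) := by
          rw [← pow_add]
          exact pow_dvd_pow _ (by omega)
        obtain ⟨s, hs⟩ := this
        refine ⟨-s * ((a + b * u) ^ 2 + (a + b * u) * (b * v) * T + (b * v) ^ 2 * D), ?_⟩
        have : tvar F α ^ (n + 1) * δ - tvar F α ^ (n + 1) * (a * T₁ + 2 * b * D₁) = 0 := by
          simp only [a, b, T₁, D₁]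
          linear_combination -tvar F α ^ (n + 1) * δ * hdd
        simp only [T₁, D₁] at this
        linear_combination hδ + this
          - ((a + b * u) ^ 2 + (a + b * u) * (b * v) * T + (b * v) ^ 2 * D) * hs
  obtain ⟨u, v, hv, -, -, h1, h2⟩ := key (α - 1)
  rw [Nat.sub_add_cancel (Nat.one_le_iff_ne_zero.2 hα), tvar_pow_self, zero_dvd_iff,
    sub_eq_zero] at h1 h2
  exact ⟨u, v, hv, h1.symm, h2.symm⟩

/-- A pencil with unit discriminant is conjugate to a constant one. -/
theorem exists_conj_constant_pencil (hα : α ≠ 0) {ι : Type} {x : ι → Mat2 (TruncRing F α)}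
    {C : Mat2 (TruncRing F α)} (hC : IsUnit C.disc) (hx : InPencil C x) :
    ∃ (T D : F) (y : ι → Mat2 (TruncRing F α)), T ^ 2 - 4 * D ≠ 0 ∧ SimConj x y ∧
      InPencil ((comp T D).map (algebraMap F (TruncRing F α))) y := by
  have := isLocalRing (F := F) hα
  have hsep : residue F hα C.trace ^ 2 - 4 * residue F hα C.det ≠ 0 := by
    rw [disc_eq, isUnit_iff hα] at hC
    rwa [map_sub, map_mul, map_pow, map_ofNat] at hC
  obtain ⟨u, v, ⟨v, rfl⟩, h1, h2⟩ := exists_quadratic_lift hα C.trace C.det hsep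
  obtain ⟨j, hj⟩ := exists_isUnit_offScalar hC
  obtain ⟨P, hP⟩ := exists_conj_comp (m := u • (1 : Mat2 _) + (v : TruncRing F α) • C) (j := j)
    (by rw [offScalar_pencil]; exact v.isUnit.mul hj)
  rw [trace_pencil, det_pencil, h1, h2] at hP
  refine ⟨_, _, fun i => P.1 * x i * (P⁻¹ : (Mat2 _)ˣ).1, hsep, ⟨P, fun i => rfl⟩, ?_⟩
  rw [conj_pencil] at hP
  rw [map_comp]
  exact (hx.conj P).of_eq (eq_pencil_of_pencil_eq hP)

end TruncRing

namespace Mat2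

section CommRing

variable {R S : Type} [CommRing R] [CommRing S] {ι : Type}

theorem map_smul_one (φ : R →+* S) (u : R) :
    (u • (1 : Mat2 R)).map φ = φ u • (1 : Mat2 S) := by
  ext a b
  fin_cases a <;> fin_cases b <;> simp

/-- Two conjugate tuples of diagonal matrices over a local ring agree up to swapping. -/
theorem eq_or_swap_of_simConj [IsLocalRing R] {x y : ι → Mat2 R} (hx : ∀ i, (x i).IsDiag)
    (hy : ∀ i, (y i).IsDiag) (h : SimConj x y) :
    (∀ i, y i = x i) ∨ ∀ i, y i = !![x i 1 1, 0; 0, x i 0 0] := by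
  obtain ⟨P, hP⟩ := h
  have key : ∀ i, y i * P.1 = P.1 * x i := fun i => by
    rw [hP, Units.inv_mul_cancel_right]
  have x01 : ∀ i, x i 0 1 = 0 := fun i => hx i (by decide)
  have x10 : ∀ i, x i 1 0 = 0 := fun i => hx i (by decide)
  have y01 : ∀ i, y i 0 1 = 0 := fun i => hy i (by decide)
  have y10 : ∀ i, y i 1 0 = 0 := fun i => hy i (by decide)
  have k := fun i a b => congrFun (congrFun (key i) a) b
  simp only [Matrix.mul_apply, Fin.sum_univ_two] at k
  have k00 := fun i => k i 0 0
  have k01 := fun i => k i 0 1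
  have k10 := fun i => k i 1 0
  have k11 := fun i => k i 1 1
  simp only [x01, x10, y01, y10, mul_zero, zero_mul, add_zero, zero_add] at k00 k01 k10 k11
  have hdet : IsUnit (P.1 0 0 * P.1 1 1 + -(P.1 0 1 * P.1 1 0)) := by
    rw [← sub_eq_add_neg, ← Matrix.det_fin_two]
    exact (isUnit_iff_det _).1 P.isUnit
  rcases IsLocalRing.isUnit_or_isUnit_of_isUnit_add hdet with hu | hu
  · left
    intro i
    have h0 := isUnit_of_mul_isUnit_left hu
    have h1 := isUnit_of_mul_isUnit_right hu
    ext a b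
    fin_cases a <;> fin_cases b
    · exact h0.mul_right_cancel ((k00 i).trans (mul_comm _ _))
    · exact (y01 i).trans (x01 i).symm
    · exact (y10 i).trans (x10 i).symm
    · exact h1.mul_right_cancel ((k11 i).trans (mul_comm _ _))
  · right
    intro i
    rw [IsUnit.neg_iff] at hu
    have h0 := isUnit_of_mul_isUnit_left hu
    have h1 := isUnit_of_mul_isUnit_right hu
    ext a b
    fin_cases a <;> fin_cases b
    · exact h0.mul_right_cancel ((k01 i).trans (mul_comm _ _))
    · exact y01 i
    · exact y10 i
    · exact h1.mul_right_cancel ((k10 i).trans (mul_comm _ _))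

theorem simConj_swap {x : ι → Mat2 R} (hx : ∀ i, (x i).IsDiag) :
    SimConj x fun i => !![x i 1 1, 0; 0, x i 0 0] := by
  refine ⟨⟨!![0, 1; 1, 0], !![0, 1; 1, 0], by simp [Matrix.one_fin_two],
    by simp [Matrix.one_fin_two]⟩, fun i => ?_⟩
  have x01 : x i 0 1 = 0 := hx i (by decide)
  have x10 : x i 1 0 = 0 := hx i (by decide)
  change _ = !![0, 1; 1, 0] * x i * !![0, 1; 1, 0]
  ext a b
  fin_cases a <;> fin_cases b <;>
    simp [Matrix.mul_apply, Matrix.vecMul, dotProduct, Fin.sum_univ_two, x01, x10]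

end CommRing

variable {F : Type} [Field F] {ι : Type}

theorem exists_simConj_isDiag {T D r : F} (hr : r ^ 2 - T * r + D = 0) (h : T ^ 2 - 4 * D ≠ 0)
    {z : ι → Mat2 F} (hz : InPencil (comp T D) z) :
    ∃ d : ι → Mat2 F, (∀ i, (d i).IsDiag) ∧ SimConj z d := by
  obtain ⟨P, hP⟩ : IsUnit (!![1, r; 1, T - r] : Mat2 F) := by
    rw [isUnit_iff_det, isUnit_iff_ne_zero, Matrix.det_fin_two]
    simp only [Matrix.of_apply, Matrix.cons_val]
    intro h0
    apply h
    linear_combination (T - 2 * r) * h0 - 4 * hr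
  have hPC : P.1 * comp T D * (P⁻¹ : (Mat2 F)ˣ).1 = Matrix.diagonal ![r, T - r] := by
    rw [Units.mul_inv_eq_iff_eq_mul, hP]
    ext a b
    fin_cases a <;> fin_cases b <;>
      simp [comp, Matrix.mul_apply, Fin.sum_univ_two] <;> linear_combination -hr
  refine ⟨_, fun i => ?_, P, fun i => rfl⟩
  obtain ⟨u, v, huv⟩ := hz i
  rw [huv, conj_pencil, hPC]
  exact (Matrix.isDiag_one.smul u).add ((Matrix.isDiag_diagonal _).smul v)

/-- Representatives of the conjugacy classes of `n`-tuples over `F` which become simultaneously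
diagonalizable over an extension: a tuple of scalars followed by the companion matrix of a
separable polynomial and elements of the algebra it generates. -/
def NormalForm (F : Type) [Field F] : ℕ → Type
  | 0 => Unit
  | n + 1 => (F × NormalForm F n) ⊕
      ({p : F × F // p.1 ^ 2 - 4 * p.2 ≠ 0} × (Fin n → F × F))

namespace NormalForm

instance [Finite F] : ∀ n, Finite (NormalForm F n)
  | 0 => inferInstanceAs (Finite Unit)
  | n + 1 =>
    have := instFinite n
    inferInstanceAs (Finite ((F × NormalForm F n) ⊕
      ({p : F × F // p.1 ^ 2 - 4 * p.2 ≠ 0} × (Fin n → F × F))))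

/-- The tuple of matrices encoded by a normal form. -/
def realize : {n : ℕ} → NormalForm F n → Fin n → Mat2 F
  | 0, _ => Fin.elim0
  | _ + 1, .inl (a, w) => Fin.cons (a • (1 : Mat2 F)) (realize w)
  | _ + 1, .inr (p, c) => Fin.cons (comp p.1.1 p.1.2)
      fun i => (c i).1 • (1 : Mat2 F) + (c i).2 • comp p.1.1 p.1.2

theorem card_disc_ne_zero [Finite F] :
    Nat.card {p : F × F // p.1 ^ 2 - 4 * p.2 ≠ 0} + Nat.card F = Nat.card F ^ 2 := by
  classical
  have h1 := Nat.card_congr (Equiv.sumCompl (fun p : F × F => p.1 ^ 2 - 4 * p.2 = 0))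
  rw [Nat.card_sum, Nat.card_prod, ← sq, add_comm] at h1
  rw [← h1]
  congr 1
  by_cases h4 : (4 : F) = 0
  · refine Nat.card_congr
      ⟨fun d => ⟨(0, d), by simp [h4]⟩, fun p => p.1.2, fun _ => rfl, fun p => ?_⟩
    have := p.2
    simp only [h4, zero_mul, sub_zero, pow_eq_zero_iff two_ne_zero] at this
    exact Subtype.ext (Prod.ext this.symm rfl)
  · refine Nat.card_congr
      ⟨fun a => ⟨(a, a ^ 2 / 4), by field_simp; simp⟩, fun p => p.1.1, fun _ => rfl, fun p => ?_⟩
    have := p.2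
    refine Subtype.ext (Prod.ext rfl ?_)
    change p.1.1 ^ 2 / 4 = p.1.2
    rw [div_eq_iff h4]
    linear_combination this

theorem card_eq [Finite F] : ∀ n, Nat.card (NormalForm F n) = Nat.card F ^ (2 * n)
  | 0 => by
    change Nat.card Unit = _
    simp
  | n + 1 => by
    change Nat.card ((F × NormalForm F n) ⊕
      ({p : F × F // p.1 ^ 2 - 4 * p.2 ≠ 0} × (Fin n → F × F))) = _
    have := card_disc_ne_zero (F := F)
    rw [Nat.card_sum, Nat.card_prod, Nat.card_prod, card_eq n, Nat.card_fun, Nat.card_prod,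
      Nat.card_eq_fintype_card (α := Fin n), Fintype.card_fin, ← sq, ← pow_mul, ← add_mul,
      add_comm, this, ← pow_add]
    congr 1
    ring

theorem exists_simConj_realize : ∀ {n : ℕ} {z : Fin n → Mat2 F} {C : Mat2 F}, C.disc ≠ 0 →
    InPencil C z → ∃ w : NormalForm F n, SimConj z w.realize
  | 0, z, _, _, _ => ⟨(), 1, fun i => i.elim0⟩
  | n + 1, z, C, hC, hz => by
    obtain ⟨u, v, huv⟩ := hz 0
    by_cases hv : v = 0
    · obtain ⟨w, P, hP⟩ := exists_simConj_realize hC (z := Fin.tail z) fun i => hz i.succ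
      refine ⟨.inl (u, w), P, Fin.cases ?_ hP⟩
      rw [huv, hv, conj_pencil, zero_smul, add_zero]
      simp [realize]
    · have hdisc : (z 0).disc ≠ 0 := by
        rw [huv, disc_eq, trace_pencil, det_pencil]
        rw [disc_eq] at hC
        intro h
        refine mul_ne_zero (pow_ne_zero 2 hv) hC ?_
        linear_combination h
      obtain ⟨j, hj⟩ := exists_isUnit_offScalar hdisc.isUnit
      obtain ⟨P, hP⟩ := exists_conj_comp hj
      have hC' : u • (1 : Mat2 F) + (Units.mk0 v hv : F) • (P.1 * C * (P⁻¹ : (Mat2 F)ˣ).1) =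
          comp (z 0).trace (z 0).det := by
        rw [← hP, Units.val_mk0, ← conj_pencil, ← huv]
      have hz' := (hz.conj P).of_eq (eq_pencil_of_pencil_eq hC')
      choose a b hab using hz'
      refine ⟨.inr (⟨((z 0).trace, (z 0).det), by rwa [← disc_eq]⟩,
        fun i => (a i.succ, b i.succ)), P, Fin.cases ?_ fun i => ?_⟩
      · exact hP.symm
      · exact (hab i.succ).symm

theorem exists_inPencil_realize : ∀ {n : ℕ} (w : NormalForm F n),
    ∃ T D : F, T ^ 2 - 4 * D ≠ 0 ∧ InPencil (comp T D) w.realize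
  | 0, _ => ⟨1, 0, by simp, fun i => i.elim0⟩
  | _ + 1, .inl (a, w) => by
    obtain ⟨T, D, h, hw⟩ := exists_inPencil_realize w
    refine ⟨T, D, h, Fin.cases ⟨a, 0, ?_⟩ hw⟩
    simp [realize]
  | _ + 1, .inr (p, c) => by
    refine ⟨_, _, p.2, Fin.cases ⟨0, 1, ?_⟩ fun i => ⟨_, _, rfl⟩⟩
    simp [realize]

theorem comp_ne_smul_one (T D a : F) : comp T D ≠ a • (1 : Mat2 F) := by
  intro h
  have := congrFun (congrFun h 1) 0
  simp [comp] at this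

theorem eq_of_simConj {K : Type} [Field K] (φ : F →+* K) : ∀ {n : ℕ} {w w' : NormalForm F n},
    SimConj (fun i => (w.realize i).map φ) (fun i => (w'.realize i).map φ) → w = w'
  | 0, _, _, _ => rfl
  | n + 1, .inl (a, w), .inl (a', w'), ⟨P, hP⟩ => by
    have h0 := hP 0
    simp only [realize, Fin.cons_zero, map_smul_one] at h0
    rw [Matrix.mul_smul, mul_one, Matrix.smul_mul, Units.mul_inv] at h0
    have h1 := congrFun (congrFun h0 0) 0
    simp only [Matrix.smul_apply, Matrix.one_apply_eq, smul_eq_mul, mul_one] at h1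
    rw [φ.injective h1, eq_of_simConj φ (w := w) (w' := w') ⟨P, fun i => hP i.succ⟩]
  | n + 1, .inl (a, w), .inr (p, c), ⟨P, hP⟩ => by
    have h0 := hP 0
    simp only [realize, Fin.cons_zero, map_smul_one, map_comp] at h0
    rw [Matrix.mul_smul, mul_one, Matrix.smul_mul, Units.mul_inv] at h0
    exact absurd h0 (comp_ne_smul_one _ _ _)
  | n + 1, .inr (p, c), .inl (a, w), h => by
    obtain ⟨P, hP⟩ := h.symm
    have h0 := hP 0
    simp only [realize, Fin.cons_zero, map_smul_one, map_comp] at h0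
    rw [Matrix.mul_smul, mul_one, Matrix.smul_mul, Units.mul_inv] at h0
    exact absurd h0 (comp_ne_smul_one _ _ _)
  | n + 1, .inr (⟨(T, D), hp⟩, c), .inr (⟨(T', D'), hp'⟩, c'), ⟨P, hP⟩ => by
    have h0 := hP 0
    simp only [realize, Fin.cons_zero, map_comp] at h0
    have hT : T' = T := by
      have := congrArg Matrix.trace h0
      rw [trace_conj] at this
      exact φ.injective (by simpa [comp, Matrix.trace_fin_two] using this)
    have hD : D' = D := by
      have := congrArg Matrix.det h0
      rw [det_conj] at this
      exact φ.injective (by simpa [comp, Matrix.det_fin_two] using this)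
    subst hT hD
    have hc : c = c' := by
      funext i
      have h1 := hP i.succ
      simp only [realize, Fin.cons_succ, map_pencil, map_comp] at h1
      rw [conj_pencil, ← h0] at h1
      have h2 := congrFun (congrFun h1 1) 0
      have h3 := congrFun (congrFun h1 0) 0
      simp [comp] at h2 h3
      exact Prod.ext (φ.injective h3.symm) (φ.injective h2.symm)
    rw [hc]

theorem exists_simConj_isDiag_map {K : Type} [Field K] (φ : F →+* K) {T D : F} {r : K}
    (hr : r ^ 2 - φ T * r + φ D = 0) (h : T ^ 2 - 4 * D ≠ 0) {z : ι → Mat2 F}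
    (hz : InPencil (comp T D) z) :
    ∃ d : ι → Mat2 K, (∀ i, (d i).IsDiag) ∧ SimConj (fun i => (z i).map φ) d := by
  have hz' := hz.map φ
  rw [map_comp] at hz'
  refine exists_simConj_isDiag hr ?_ hz'
  intro h0
  refine h (φ.injective ?_)
  rw [map_sub, map_pow, map_mul, map_ofNat, h0, map_zero]

end NormalForm

end Mat2

namespace TruncRing

open Mat2

variable {F K : Type} [Field F] [Field K] {α g : ℕ}

theorem series_eq_sum (c : Fin α → F) :
    series α c = ∑ k : Fin α, algebraMap F (TruncRing F α) (c k) * tvar F α ^ (k : ℕ) := by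
  simp only [series, polyOfCoeffs, map_sum, map_mul, tvar_pow]
  rfl

/-- The tuple of matrices over `F[t]/(t^α)` with prescribed coefficient matrices. -/
noncomputable def assemble (z : Fin α × Fin g → Mat2 F) (i : Fin g) : Mat2 (TruncRing F α) :=
  ∑ k : Fin α, tvar F α ^ (k : ℕ) • (algebraMap F (TruncRing F α)).mapMatrix (z (k, i))

theorem assemble_apply (z : Fin α × Fin g → Mat2 F) (i : Fin g) (a b : Fin 2) :
    assemble z i a b = series α fun k => z (k, i) a b := by
  rw [assemble, series_eq_sum, Matrix.sum_apply]
  exact Finset.sum_congr rfl fun k _ => mul_comm _ _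

theorem assemble_bijective :
    Function.Bijective (assemble : (Fin α × Fin g → Mat2 F) → Fin g → Mat2 (TruncRing F α)) := by
  constructor
  · intro z z' h
    funext ⟨k, i⟩
    ext a b
    have := congrFun (congrFun (congrFun h i) a) b
    rw [assemble_apply, assemble_apply] at this
    exact congrFun (series_bijective.1 this) k
  · intro x
    choose c hc using fun i a b => series_bijective.2 (x i a b)
    refine ⟨fun p => Matrix.of fun a b => c p.2 a b p.1, ?_⟩
    funext i
    ext a b
    rw [assemble_apply]
    exact hc i a b

theorem assemble_map (φ : F →+* K) (z : Fin α × Fin g → Mat2 F) :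
    assemble (fun p => (z p).map φ) = fun i => (assemble z i).map (truncMap φ α) := by
  funext i
  ext a b
  rw [Matrix.map_apply, assemble_apply, assemble_apply, truncMap_series]
  rfl

theorem isDiag_assemble {d : Fin α × Fin g → Mat2 F} (hd : ∀ p, (d p).IsDiag) (i : Fin g) :
    (assemble d i).IsDiag := by
  intro a b hab
  rw [assemble_apply]
  simp [series_eq_sum, hd _ hab]

theorem simConj_assemble {z z' : Fin α × Fin g → Mat2 F} (h : SimConj z z') :
    SimConj (assemble z) (assemble z') :=
  (h.map (algebraMap F (TruncRing F α))).sum_smul fun k => tvar F α ^ (k : ℕ)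

theorem simConj_of_simConj_assemble (hα : α ≠ 0) {d d' : Fin α × Fin g → Mat2 F}
    (hd : ∀ p, (d p).IsDiag) (hd' : ∀ p, (d' p).IsDiag) (h : SimConj (assemble d) (assemble d')) :
    SimConj d d' := by
  have := isLocalRing (F := F) hα
  rcases eq_or_swap_of_simConj (isDiag_assemble hd) (isDiag_assemble hd') h with h | h
  · rw [assemble_bijective.1 (funext h)]
    exact SimConj.refl _
  · have h1 : assemble d' = assemble fun p => !![d p 1 1, 0; 0, d p 0 0] := by
      funext i
      rw [h]
      ext a b
      rw [assemble_apply]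
      fin_cases a <;> fin_cases b <;> simp [assemble_apply] <;> simp [series_eq_sum]
    rw [assemble_bijective.1 h1]
    exact simConj_swap hd

/-- A tuple over `F[t]/(t^α)` which is diagonalizable over an extension is conjugate to a tuple
assembled from a normal form. -/
theorem exists_simConj_assemble (hα : α ≠ 0) (e : Fin α × Fin g ≃ Fin (α * g))
    {x : Fin g → Mat2 (TruncRing F α)} (hx : ¬ AbsIndecTwo F α g x) :
    ∃ w : NormalForm F (α * g), SimConj (assemble (w.realize ∘ e)) x := by
  simp only [AbsIndecTwo, not_forall, not_not] at hx
  obtain ⟨K, _, _, _, hK⟩ := hx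
  obtain ⟨C, hC, hxC⟩ := exists_pencil_of_simDiagonalizable_map hα _ hK
  obtain ⟨T, D, y, hTD, hxy, hy⟩ := exists_conj_constant_pencil hα hC hxC
  choose u v huv using hy
  choose c hc using fun i => series_bijective.2 (u i)
  choose d hd using fun i => series_bijective.2 (v i)
  let z : Fin α × Fin g → Mat2 F := fun p => c p.2 p.1 • (1 : Mat2 F) + d p.2 p.1 • comp T D
  have hz : assemble z = y := by
    funext i
    rw [huv, ← hc, ← hd]
    simp only [assemble, z, series_eq_sum, Finset.sum_smul, ← Finset.sum_add_distrib]
    refine Finset.sum_congr rfl fun k _ => ?_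
    rw [RingHom.mapMatrix_apply, map_pencil, smul_add, smul_smul, smul_smul,
      mul_comm (tvar F α ^ _), mul_comm (tvar F α ^ _)]
  have hpen : InPencil (comp T D) (z ∘ e.symm) := fun i => ⟨_, _, rfl⟩
  obtain ⟨w, hw⟩ := NormalForm.exists_simConj_realize (by rwa [disc_comp]) hpen
  refine ⟨w, (hxy.trans ?_).symm⟩
  have h1 := hw.comp e
  rw [Function.comp_assoc, Equiv.symm_comp_self, Function.comp_id] at h1
  rw [← hz]
  exact simConj_assemble h1

theorem not_absIndecTwo_assemble (e : Fin α × Fin g ≃ Fin (α * g)) (w : NormalForm F (α * g)) :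
    ¬ AbsIndecTwo F α g (assemble (w.realize ∘ e)) := by
  obtain ⟨T, D, hTD, hw⟩ := w.exists_inPencil_realize
  let p : Polynomial F := Polynomial.X ^ 2 - Polynomial.C T * Polynomial.X + Polynomial.C D
  have hp : (p.map (algebraMap F p.SplittingField)).degree ≠ 0 := by
    rw [Polynomial.degree_map]
    have : p.degree = 2 := by
      simp only [p]
      compute_degree!
    rw [this]
    decide
  obtain ⟨r, hr⟩ := (Polynomial.SplittingField.splits p).exists_eval_eq_zero hp
  have hr' : r ^ 2 - algebraMap F p.SplittingField T * r + algebraMap F p.SplittingField D = 0 := by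
    simpa [p] using hr
  obtain ⟨d, hd, P, hP⟩ := NormalForm.exists_simConj_isDiag_map _ hr' hTD hw
  obtain ⟨Q, hQ⟩ := simConj_assemble (SimConj.comp ⟨P, hP⟩ e)
  intro h
  refine h p.SplittingField ⟨Q, fun i => ?_⟩
  have h1 := hQ i
  rw [show (fun i => (w.realize i).map (algebraMap F p.SplittingField)) ∘ e =
    fun i => ((w.realize ∘ e) i).map (algebraMap F p.SplittingField) from rfl, assemble_map] at h1
  rw [← h1]
  exact isDiag_assemble (fun p => hd (e p)) i

theorem normalForm_eq_of_simConj_assemble [IsAlgClosed K] (φ : F →+* K) (hα : α ≠ 0)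
    (e : Fin α × Fin g ≃ Fin (α * g))
    {w w' : NormalForm F (α * g)}
    (h : SimConj (assemble (w.realize ∘ e)) (assemble (w'.realize ∘ e))) : w = w' := by
  have hdiag : ∀ w : NormalForm F (α * g), ∃ d : Fin α × Fin g → Mat2 K,
      (∀ i, (d i).IsDiag) ∧ SimConj (fun i => ((w.realize ∘ e) i).map φ) d := by
    intro w
    obtain ⟨T, D, hTD, hw⟩ := w.exists_inPencil_realize
    let p : Polynomial K := Polynomial.X ^ 2 - Polynomial.C (φ T) * Polynomial.X + Polynomial.C (φ D)
    obtain ⟨r, hr⟩ := IsAlgClosed.exists_root p (by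
      have : p.degree = 2 := by
        simp only [p]
        compute_degree!
      rw [this]
      decide)
    have hr' : r ^ 2 - φ T * r + φ D = 0 := by
      simpa [p] using hr
    obtain ⟨d, hd, hconj⟩ := NormalForm.exists_simConj_isDiag_map φ hr' hTD hw
    exact ⟨d ∘ e, fun i => hd (e i), hconj.comp e⟩
  obtain ⟨d, hd, hwd⟩ := hdiag w
  obtain ⟨d', hd', hwd'⟩ := hdiag w'
  have h1 := h.map (truncMap φ α)
  rw [← assemble_map, ← assemble_map] at h1
  have h2 := simConj_of_simConj_assemble hα hd hd'
    (((simConj_assemble hwd).symm.trans h1).trans (simConj_assemble hwd'))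
  have h3 := ((hwd.trans h2).trans hwd'.symm).comp e.symm
  refine NormalForm.eq_of_simConj φ ?_
  simpa [Function.comp_def] using h3

end TruncRing

theorem AbsIndecTwo.of_simConj {F : Type} [Field F] {α g : ℕ}
    {x y : Fin g → Mat2 (TruncRing F α)} (hx : AbsIndecTwo F α g x) (h : SimConj x y) :
    AbsIndecTwo F α g y := by
  intro K _ _ _ hy
  obtain ⟨P, hP⟩ := hy
  obtain ⟨Q, hQ⟩ := (h.map (truncMap (algebraMap F K) α)).trans ⟨P, fun _ => rfl⟩
  exact hx K ⟨Q, fun i => by rw [← hQ]; exact hP i⟩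

open TruncRing Mat2 in
theorem card_quot_simConj_eq_add {F : Type} [Field F] [Finite F] {α : ℕ} (hα : α ≠ 0) (g : ℕ) :
    Nat.card (Quot fun x y : {x : Fin g → Mat2 (TruncRing F α) // AbsIndecTwo F α g x} =>
      SimConj x.1 y.1) + Nat.card F ^ (2 * (α * g)) =
    Nat.card (Quot (SimConj :
      (Fin g → Mat2 (TruncRing F α)) → (Fin g → Mat2 (TruncRing F α)) → Prop)) := by
  have heq := SimConj.equivalence (TruncRing F α) (Fin g)
  have hsub : Equivalence fun x y : {x : Fin g → Mat2 (TruncRing F α) // AbsIndecTwo F α g x} =>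
      SimConj x.1 y.1 := heq.comap Subtype.val
  let e : Fin α × Fin g ≃ Fin (α * g) := finProdFinEquiv
  let f : (Quot fun x y : {x : Fin g → Mat2 (TruncRing F α) // AbsIndecTwo F α g x} =>
      SimConj x.1 y.1) ⊕ NormalForm F (α * g) → Quot (SimConj :
      (Fin g → Mat2 (TruncRing F α)) → (Fin g → Mat2 (TruncRing F α)) → Prop) :=
    Sum.elim (Quot.map Subtype.val fun _ _ h => h) fun w => Quot.mk _ (assemble (w.realize ∘ e))
  have hf : Function.Bijective f := by
    constructor
    · let φ := algebraMap F (AlgebraicClosure F)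
      rintro (x | w) (y | w') h
      · obtain ⟨x, rfl⟩ := Quot.exists_rep x
        obtain ⟨y, rfl⟩ := Quot.exists_rep y
        exact congrArg Sum.inl ((hsub.quot_mk_eq_iff _ _).2 ((heq.quot_mk_eq_iff _ _).1 h))
      · obtain ⟨x, rfl⟩ := Quot.exists_rep x
        exact absurd (x.2.of_simConj ((heq.quot_mk_eq_iff _ _).1 h))
          (not_absIndecTwo_assemble e w')
      · obtain ⟨y, rfl⟩ := Quot.exists_rep y
        exact absurd (y.2.of_simConj ((heq.quot_mk_eq_iff _ _).1 h.symm))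
          (not_absIndecTwo_assemble e w)
      · exact congrArg Sum.inr
          (normalForm_eq_of_simConj_assemble φ hα e ((heq.quot_mk_eq_iff _ _).1 h))
    · rintro ⟨x⟩
      by_cases hx : AbsIndecTwo F α g x
      · exact ⟨.inl (Quot.mk _ ⟨x, hx⟩), rfl⟩
      · obtain ⟨w, hw⟩ := exists_simConj_assemble hα e hx
        exact ⟨.inr w, Quot.sound hw⟩
  rw [← Nat.card_eq_of_bijective f hf, Nat.card_sum, NormalForm.card_eq]

/-- Let `g ≥ 1`, `α ≥ 1` and `𝔽_q` a finite field; `R := 𝔽_q[t]/(t^α)`.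
The number of `GL₂(R)`-simultaneous-conjugacy classes of absolutely indecomposable
tuples `x ∈ M₂(R)^g` equals
`q^{2αg−1}·(q^{2g}−1)·(q^{α(2g−3)}−1) / ((q²−1)·(q^{2g−3}−1))`. -/
theorem gloop_rank_two_kac_count (g α : ℕ) (hg : 1 ≤ g) (hα : 1 ≤ α)
    (F : Type) [Field F] [Fintype F] :
    (Nat.card (Quot (fun x y :
        {x : Fin g → Matrix (Fin 2) (Fin 2) (TruncRing F α) // AbsIndecTwo F α g x} =>
      ∃ P : (Matrix (Fin 2) (Fin 2) (TruncRing F α))ˣ, ∀ i : Fin g,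
        y.1 i = (P : Matrix (Fin 2) (Fin 2) (TruncRing F α)) * x.1 i *
          ((P⁻¹ : (Matrix (Fin 2) (Fin 2) (TruncRing F α))ˣ) :
            Matrix (Fin 2) (Fin 2) (TruncRing F α)))) : ℚ)
      = (Fintype.card F : ℚ) ^ (2 * (α : ℤ) * (g : ℤ) - 1)
          * ((Fintype.card F : ℚ) ^ (2 * (g : ℤ)) - 1)
          * ((Fintype.card F : ℚ) ^ ((α : ℤ) * (2 * (g : ℤ) - 3)) - 1)
        / (((Fintype.card F : ℚ) ^ (2 : ℤ) - 1)
          * ((Fintype.card F : ℚ) ^ (2 * (g : ℤ) - 3) - 1)) := by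
  have hα0 : α ≠ 0 := by omega
  have h1 := TruncRing.card_quot_simConj (F := F) hα0 g
  have h2 := congrArg (Nat.cast (R := ℚ)) (card_quot_simConj_eq_add (F := F) hα0 g)
  rw [Nat.cast_add, Nat.cast_pow, Nat.card_eq_fintype_card (α := F), h1, ← mul_assoc,
    add_comm] at h2
  exact add_left_cancel h2
end

section
/- Let g ≥ 2 and α ≥ 1 be integers, 𝔽_q a finite field, and R := 𝔽_q[t]/(t^α). Then the number of pairs (x, y) of g-tuples of 2×2 matrices over R satisfying Σ_{i=1}^{g} (x_i y_i − y_i x_i) = 0 equals ((q^{2g} − 1)·q^{α(8g−3)} − (q³ − 1)·q^{6αg}) / (q³·(q^{2g−3} − 1)). -/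
section CharacterSum

lemma AddChar.map_sum_eq_prod {A M ι : Type*} [AddCommMonoid A] [CommMonoid M]
    (ψ : AddChar A M) (s : Finset ι) (f : ι → A) :
    ψ (∑ i ∈ s, f i) = ∏ i ∈ s, ψ (f i) := by
  classical
  induction s using Finset.induction_on with
  | empty => simp
  | insert i s hi ih => rw [Finset.sum_insert hi, Finset.prod_insert hi, map_add_eq_mul, ih]

variable {R n : Type*} [CommRing R] [Fintype n] [DecidableEq n]

/-- Orthogonality of characters for the trace pairing on matrices. -/
lemma sum_addChar_trace_mul [Fintype (Matrix n n R)] [DecidableEq (Matrix n n R)]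
    {ψ : AddChar R ℂ} (hψ : ψ.IsPrimitive) (m : Matrix n n R) :
    ∑ y : Matrix n n R, ψ (m * y).trace
      = if m = 0 then (Fintype.card (Matrix n n R) : ℂ) else 0 := by
  classical
  let χ : AddChar (Matrix n n R) ℂ :=
    ψ.compAddMonoidHom ((Matrix.traceAddMonoidHom n R).comp (AddMonoidHom.mulLeft m))
  have hχ (y : Matrix n n R) : χ y = ψ (m * y).trace := rfl
  have hiff : χ = 0 ↔ m = 0 := by
    refine ⟨fun h => ?_, fun h => ?_⟩
    · ext i j
      by_contra hij
      obtain ⟨r, hr⟩ := AddChar.ne_one_iff.1 (hψ hij)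
      apply hr
      have := DFunLike.congr_fun h (Matrix.single j i r)
      rw [hχ] at this
      simpa [AddChar.mulShift_apply, Matrix.trace_mul_single] using this
    · ext y
      simp [hχ, h]
  simp_rw [← hχ, AddChar.sum_eq_ite, hiff]

/-- Double counting by characters: the solutions of `∑ [xᵢ, yᵢ] = 0` are governed by the
centralizers of single matrices. -/
lemma card_sum_commutator_eq_zero_mul [Fintype (Matrix n n R)] {ψ : AddChar R ℂ}
    (hψ : ψ.IsPrimitive) (g : ℕ) :
    Nat.card {xy : (Fin g → Matrix n n R) × (Fin g → Matrix n n R) //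
        ∑ i, (xy.1 i * xy.2 i - xy.2 i * xy.1 i) = 0} * Nat.card (Matrix n n R)
      = Nat.card (Matrix n n R) ^ g *
        ∑ w : Matrix n n R, Nat.card {x : Matrix n n R // w * x = x * w} ^ g := by
  classical
  have htrace (w x y : Matrix n n R) :
      (w * (x * y - y * x)).trace = ((w * x - x * w) * y).trace := by
    rw [mul_sub, sub_mul, Matrix.trace_sub, Matrix.trace_sub, ← mul_assoc, ← mul_assoc,
      Matrix.trace_mul_comm (w * y) x, ← mul_assoc]
  have hprod (w : Matrix n n R) (x y : Fin g → Matrix n n R) :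
      ψ ((∑ i, (x i * y i - y i * x i)) * w).trace
        = ∏ i, ψ ((w * x i - x i * w) * y i).trace := by
    rw [Matrix.trace_mul_comm, Finset.mul_sum, Matrix.trace_sum, AddChar.map_sum_eq_prod]
    simp_rw [htrace]
  have hleft : ∑ xy : (Fin g → Matrix n n R) × (Fin g → Matrix n n R), ∑ w : Matrix n n R,
      ψ ((∑ i, (xy.1 i * xy.2 i - xy.2 i * xy.1 i)) * w).trace
      = (Nat.card {xy : (Fin g → Matrix n n R) × (Fin g → Matrix n n R) //
        ∑ i, (xy.1 i * xy.2 i - xy.2 i * xy.1 i) = 0} * Nat.card (Matrix n n R) : ℂ) := by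
    simp_rw [sum_addChar_trace_mul hψ]
    rw [← Finset.sum_filter, Finset.sum_const, nsmul_eq_mul, Nat.card_eq_fintype_card,
      Fintype.card_subtype, Nat.card_eq_fintype_card]
  have hright (w : Matrix n n R) :
      ∑ xy : (Fin g → Matrix n n R) × (Fin g → Matrix n n R),
        ψ ((∑ i, (xy.1 i * xy.2 i - xy.2 i * xy.1 i)) * w).trace
      = (Nat.card (Matrix n n R) : ℂ) ^ g *
        (Nat.card {x : Matrix n n R // w * x = x * w} : ℂ) ^ g := by
    simp_rw [hprod]
    rw [Fintype.sum_prod_type]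
    have hy (x : Fin g → Matrix n n R) :
        ∑ y : Fin g → Matrix n n R, ∏ i, ψ ((w * x i - x i * w) * y i).trace
        = ∏ i, if w * x i - x i * w = 0 then (Fintype.card (Matrix n n R) : ℂ) else 0 := by
      rw [← Fintype.prod_sum fun i (y : Matrix n n R) => ψ ((w * x i - x i * w) * y).trace]
      simp_rw [sum_addChar_trace_mul hψ]
    simp_rw [hy]
    rw [← Fintype.sum_pow fun x =>
      if w * x - x * w = 0 then (Fintype.card (Matrix n n R) : ℂ) else 0]
    rw [← Finset.sum_filter, Finset.sum_const, nsmul_eq_mul,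
      Nat.card_eq_fintype_card, Nat.card_eq_fintype_card, Fintype.card_subtype]
    simp [sub_eq_zero, mul_pow, mul_comm]
  rw [← Nat.cast_inj (R := ℂ)]
  push_cast
  rw [← hleft, Finset.sum_comm, Finset.mul_sum]
  exact Finset.sum_congr rfl fun w _ => hright w

end CharacterSum

section Collinear

/-- Two vectors are collinear when all their `2 × 2` minors vanish. -/
def Collinear₂ {R ι : Type*} [CommRing R] (w u : ι → R) : Prop :=
  ∀ i j, w i * u j = w j * u i

/-- The `g`-th moment of the number of vectors collinear to a given one. -/
noncomputable def collinearMoment (R ι : Type*) [CommRing R] [Fintype (ι → R)] (g : ℕ) : ℕ :=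
  ∑ w : ι → R, Nat.card {u : ι → R // Collinear₂ w u} ^ g

variable {R ι : Type*} [CommRing R]

/-- The vectors collinear to a vector with a unit coordinate are its multiples. -/
lemma card_collinear_of_isUnit {w : ι → R} {i : ι} (hi : IsUnit (w i)) :
    Nat.card {u : ι → R // Collinear₂ w u} = Nat.card R := by
  refine (Nat.card_congr (Equiv.ofBijective
    (fun s : R => (⟨s • w, fun j k => by simp only [Pi.smul_apply, smul_eq_mul]; ring⟩ :
      {u : ι → R // Collinear₂ w u})) ⟨fun s s' h => ?_, fun u => ?_⟩)).symm
  · have := congrFun (congrArg Subtype.val h) i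
    exact hi.mul_left_injective this
  · obtain ⟨v, hv⟩ := hi.exists_left_inv
    refine ⟨v * u.1 i, Subtype.ext (funext fun j => ?_)⟩
    have h := u.2 i j
    simp only [Pi.smul_apply, smul_eq_mul]
    linear_combination (-v) * h + u.1 j * hv

variable {R' : Type*} [CommRing R']

/-- Number of lifts along a surjection of a set of vectors. -/
lemma card_subtype_comp_surjective [Finite R] [Finite R'] [Fintype ι] (π : R →+* R')
    (hπ : Function.Surjective π) {k : ℕ} (hk : Nat.card R = k * Nat.card R')
    (P : (ι → R') → Prop) :
    Nat.card {u : ι → R // P (π ∘ u)} = k ^ Fintype.card ι * Nat.card {u : ι → R' // P u} := by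
  classical
  cases nonempty_fintype R
  cases nonempty_fintype R'
  have hcst (y : R') : Finset.card {x : R | π x = y} = Finset.card {x : R | π x = 0} :=
    AddMonoidHom.card_fiber_eq_of_mem_range π.toAddMonoidHom (hπ y) (hπ 0)
  have hfib (y : R') : Finset.card {x : R | π x = y} = k := by
    have h1 : Fintype.card R = ∑ y : R', Finset.card {x : R | π x = y} :=
      Finset.card_eq_sum_card_fiberwise fun x _ => Finset.mem_univ _
    rw [Finset.sum_congr rfl fun y _ => hcst y, Finset.sum_const, smul_eq_mul,
      Finset.card_univ, ← Nat.card_eq_fintype_card, hk, Nat.card_eq_fintype_card, mul_comm] at h1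
    rw [hcst, ← Nat.eq_of_mul_eq_mul_left Fintype.card_pos h1]
  rw [Nat.card_eq_fintype_card, Nat.card_eq_fintype_card, Fintype.card_subtype,
    Fintype.card_subtype,
    Finset.card_eq_sum_card_fiberwise (f := fun u : ι → R => π ∘ u)
      (t := {u : ι → R' | P u}) (fun u hu => by simpa using hu), mul_comm]
  refine Finset.sum_const_nat fun u hu => ?_
  have : (Finset.univ.filter fun v : ι → R => P (π ∘ v)).filter (fun v => π ∘ v = u)
      = Fintype.piFinset fun i => Finset.univ.filter fun x : R => π x = u i := by
    ext v
    simp only [Finset.mem_filter, Finset.mem_univ, true_and, Fintype.mem_piFinset]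
    refine ⟨fun h i => congrFun h.2 i, fun h => ?_⟩
    have : π ∘ v = u := funext h
    exact ⟨by simpa [this] using hu, this⟩
  rw [this, Fintype.card_piFinset]
  simp [hfib]

/-- Recursion for the collinear moment along a small extension `R → R'` of a ring whose
nonunits are the multiples of `t`, with kernel the annihilator of `t`. -/
lemma collinearMoment_of_surjective [Fintype R] [Fintype R'] [Fintype ι]
    [Fintype (ι → R)] [Fintype (ι → R')] (π : R →+* R')
    (hπ : Function.Surjective π) {k : ℕ} (hk : Nat.card R = k * Nat.card R') {t : R}
    (ht : ∀ x, π x = 0 ↔ t * x = 0) (hunit : ∀ x, ¬ IsUnit x ↔ t ∣ x) (g : ℕ) :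
    (collinearMoment R ι g : ℤ)
      = ((Nat.card R : ℤ) ^ Fintype.card ι - (Nat.card R' : ℤ) ^ Fintype.card ι) * Nat.card R ^ g
        + (k ^ Fintype.card ι) ^ g * collinearMoment R' ι g := by
  classical
  choose s hs using hπ
  let m (w : ι → R') : ι → R := fun i => t * s (w i)
  have hm : Function.Injective m := fun w w' h => funext fun i => by
    have h0 : t * (s (w i) - s (w' i)) = 0 := by
      rw [mul_sub, sub_eq_zero]; exact congrFun h i
    rw [← ht, map_sub, hs, hs, sub_eq_zero] at h0
    exact h0
  have himage : (Finset.univ.filter fun w : ι → R => ¬ ∃ i, IsUnit (w i))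
      = Finset.univ.map ⟨m, hm⟩ := by
    ext w
    simp only [Finset.mem_filter, Finset.mem_univ, true_and, Finset.mem_map,
      Function.Embedding.coeFn_mk, not_exists]
    refine ⟨fun h => ?_, ?_⟩
    · choose v hv using fun i => (hunit _).1 (h i)
      refine ⟨fun i => π (v i), funext fun i => ?_⟩
      have h0 : t * (s (π (v i)) - v i) = 0 := by rw [← ht, map_sub, hs, sub_self]
      rw [hv i]
      linear_combination h0
    · rintro ⟨v, rfl⟩ i
      exact (hunit _).2 (dvd_mul_right _ _)
  have hcard (w : ι → R') : Nat.card {u : ι → R // Collinear₂ (m w) u}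
      = k ^ Fintype.card ι * Nat.card {u : ι → R' // Collinear₂ w u} := by
    rw [← card_subtype_comp_surjective π (fun y => ⟨s y, hs y⟩) hk]
    refine Nat.card_congr (Equiv.subtypeEquivRight fun u => forall₂_congr fun i j => ?_)
    have h := ht (s (w i) * u j - s (w j) * u i)
    rw [map_sub, map_mul, map_mul, hs, hs, mul_sub, sub_eq_zero, sub_eq_zero] at h
    simp only [m, Function.comp_apply, mul_assoc]
    exact h.symm
  have hcount : ((Finset.univ.filter fun w : ι → R => ∃ i, IsUnit (w i)).card : ℤ)
      = (Nat.card R : ℤ) ^ Fintype.card ι - (Nat.card R' : ℤ) ^ Fintype.card ι := by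
    have h := Finset.card_filter_add_card_filter_not (s := Finset.univ)
      (fun w : ι → R => ∃ i, IsUnit (w i))
    rw [himage, Finset.card_map, Finset.card_univ, Finset.card_univ, ← Nat.card_eq_fintype_card,
      ← Nat.card_eq_fintype_card, Nat.card_fun, Nat.card_fun, Nat.card_eq_fintype_card (α := ι)] at h
    rw [eq_sub_iff_add_eq]
    exact_mod_cast h
  rw [← hcount, collinearMoment, collinearMoment,
    ← Finset.sum_filter_add_sum_filter_not _ (fun w : ι → R => ∃ i, IsUnit (w i)), himage,
    Finset.sum_map, Finset.sum_congr rfl fun w hw => by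
      obtain ⟨i, hi⟩ := (Finset.mem_filter.1 hw).2
      rw [card_collinear_of_isUnit hi]]
  simp only [Function.Embedding.coeFn_mk, hcard, mul_pow, Finset.sum_const, smul_eq_mul]
  push_cast
  rw [Finset.mul_sum]

/-- The centralizer of a `2 × 2` matrix, through collinearity in `gl₂` modulo scalars. -/
lemma sum_card_centralizer_pow [Fintype R] [Fintype (Matrix (Fin 2) (Fin 2) R)]
    [Fintype (Fin 3 → R)] (g : ℕ) :
    ∑ w : Matrix (Fin 2) (Fin 2) R,
        Nat.card {x : Matrix (Fin 2) (Fin 2) R // w * x = x * w} ^ g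
      = Nat.card R ^ (g + 1) * collinearMoment R (Fin 3) g := by
  let e : R × (Fin 3 → R) ≃ Matrix (Fin 2) (Fin 2) R :=
    { toFun := fun p => !![p.1 + p.2 0, p.2 1; p.2 2, p.1]
      invFun := fun x => (x 1 1, ![x 0 0 - x 1 1, x 0 1, x 1 0])
      left_inv := fun p => by
        refine Prod.ext rfl (funext fun i => ?_)
        fin_cases i <;> simp
      right_inv := fun x => by
        ext i j
        fin_cases i <;> fin_cases j <;> simp }
  have hcomm (p r : R × (Fin 3 → R)) : e p * e r = e r * e p ↔ Collinear₂ p.2 r.2 := by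
    simp only [e, Equiv.coe_fn_mk, Matrix.mul_fin_two, Collinear₂, Fin.forall_fin_succ,
      ← Matrix.ext_iff]
    simp
    constructor
    · rintro ⟨⟨h1, h2⟩, h3, h4⟩
      refine ⟨⟨?_, ?_⟩, ⟨?_, ?_⟩, ?_, ?_⟩ <;> grind
    · rintro ⟨⟨h1, h2⟩, ⟨h3, h4⟩, h5, h6⟩
      refine ⟨⟨?_, ?_⟩, ?_, ?_⟩ <;> grind
  have hcard (p : R × (Fin 3 → R)) :
      Nat.card {x : Matrix (Fin 2) (Fin 2) R // e p * x = x * e p}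
        = Nat.card R * Nat.card {u : Fin 3 → R // Collinear₂ p.2 u} := by
    rw [← Nat.card_prod]
    refine Nat.card_congr ((e.subtypeEquiv fun r => (hcomm p r).symm).symm.trans ?_)
    exact
      { toFun := fun r => (r.1.1, ⟨r.1.2, r.2⟩)
        invFun := fun r => ⟨(r.1, r.2.1), r.2.2⟩ }
  rw [← e.sum_comp, Fintype.sum_prod_type]
  simp only [hcard, mul_pow, collinearMoment, Finset.mul_sum, Finset.sum_const, Finset.card_univ,
    smul_eq_mul, Nat.card_eq_fintype_card, pow_succ]
  refine Finset.sum_congr rfl fun w _ => ?_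
  ring

end Collinear

section Truncated

open Polynomial

variable {F : Type} [Field F]

lemma TruncRing.mk_eq_zero_iff_s6 {α : ℕ} (p : F[X]) :
    (Ideal.Quotient.mk _ p : TruncRing F α) = 0 ↔ X ^ α ∣ p := by
  rw [Ideal.Quotient.eq_zero_iff_mem, Ideal.mem_span_singleton]

lemma TruncRing.finite [Finite F] (α : ℕ) : Finite (TruncRing F α) :=
  have : Module.Finite F (TruncRing F α) := (monic_X_pow α).finite_quotient
  Module.finite_of_finite F

lemma TruncRing.card [Finite F] (α : ℕ) : Nat.card (TruncRing F α) = Nat.card F ^ α := by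
  have : Module.Finite F (TruncRing F α) := (monic_X_pow α).finite_quotient
  rw [Module.natCard_eq_pow_finrank (K := F), finrank_quotient_span_eq_natDegree, natDegree_X_pow]

lemma TruncRing.not_isUnit_iff_s6 {α : ℕ} (x : TruncRing F (α + 1)) :
    ¬ IsUnit x ↔ tvar F (α + 1) ∣ x := by
  constructor
  · obtain ⟨p, rfl⟩ := Ideal.Quotient.mk_surjective x
    intro h
    by_contra hX
    apply h
    have hXp : ¬ X ∣ p := fun hd => hX (map_dvd (Ideal.Quotient.mk _) hd)
    obtain ⟨a, b, hab⟩ := ((irreducible_X.coprime_iff_not_dvd).2 hXp).pow_left (m := α + 1)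
    refine IsUnit.of_mul_eq_one_right (Ideal.Quotient.mk _ b) ?_
    rw [← map_mul, ← map_one (Ideal.Quotient.mk _), Ideal.Quotient.eq, Ideal.mem_span_singleton]
    exact ⟨-a, by linear_combination hab⟩
  · intro h hx
    have ht := isUnit_of_dvd_unit h hx
    have hnil : IsNilpotent (tvar F (α + 1)) :=
      ⟨α + 1, by rw [tvar, ← map_pow, TruncRing.mk_eq_zero_iff_s6]⟩
    have : Nontrivial (TruncRing F (α + 1)) := by
      refine nontrivial_of_ne 1 0 fun h1 => ?_
      rw [← map_one (Ideal.Quotient.mk _), TruncRing.mk_eq_zero_iff_s6, X_pow_dvd_iff] at h1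
      simpa using h1 0 (by omega)
    exact hnil.not_isUnit ht

/-- Reduction `F[t]/(t^(α+1)) → F[t]/(t^α)`. -/
noncomputable def TruncRing.reduction (F : Type) [Field F] (α : ℕ) :
    TruncRing F (α + 1) →+* TruncRing F α :=
  Ideal.Quotient.factor (Ideal.span_singleton_le_span_singleton.2 (pow_dvd_pow X α.le_succ))

lemma TruncRing.reduction_surjective (α : ℕ) :
    Function.Surjective (TruncRing.reduction F α) :=
  Ideal.Quotient.factor_surjective _

lemma TruncRing.reduction_eq_zero_iff {α : ℕ} (x : TruncRing F (α + 1)) :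
    TruncRing.reduction F α x = 0 ↔ tvar F (α + 1) * x = 0 := by
  obtain ⟨p, rfl⟩ := Ideal.Quotient.mk_surjective x
  rw [tvar, ← map_mul, TruncRing.mk_eq_zero_iff_s6, TruncRing.reduction, Ideal.Quotient.factor_mk,
    TruncRing.mk_eq_zero_iff_s6, pow_succ', mul_dvd_mul_iff_left X_ne_zero]

/-- The top coefficient of a truncated polynomial. -/
noncomputable def TruncRing.topCoeff (F : Type) [Field F] (α : ℕ) : TruncRing F (α + 1) →+ F :=
  QuotientAddGroup.lift _ (lcoeff F α).toAddMonoidHom fun p hp => by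
    have hp' : X ^ (α + 1) ∣ p := Ideal.mem_span_singleton.1 hp
    exact X_pow_dvd_iff.1 hp' α α.lt_succ_self

lemma TruncRing.topCoeff_mk (α : ℕ) (p : F[X]) :
    TruncRing.topCoeff F α (Ideal.Quotient.mk _ p) = p.coeff α := rfl

lemma TruncRing.exists_isPrimitive [Fintype F] (α : ℕ) :
    ∃ ψ : AddChar (TruncRing F (α + 1)) ℂ, ψ.IsPrimitive := by
  have hψ := AddChar.FiniteField.primitiveChar_to_Complex_isPrimitive F
  refine ⟨(AddChar.FiniteField.primitiveChar_to_Complex F).compAddMonoidHom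
    (TruncRing.topCoeff F α), fun x hx h => hx ?_⟩
  obtain ⟨p, rfl⟩ := Ideal.Quotient.mk_surjective x
  rw [TruncRing.mk_eq_zero_iff_s6, X_pow_dvd_iff]
  intro d hd
  by_contra hne
  refine hψ hne (AddChar.ext _ _ fun c => ?_)
  have hc := DFunLike.congr_fun h (Ideal.Quotient.mk _ (C c * X ^ (α - d)))
  rw [AddChar.mulShift_apply, AddChar.compAddMonoidHom_apply, ← map_mul,
    TruncRing.topCoeff_mk, ← mul_assoc, coeff_mul_X_pow', if_pos (Nat.sub_le _ _),
    Nat.sub_sub_self (Nat.lt_succ_iff.1 hd), coeff_mul_C] at hc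
  exact hc

end Truncated

section Count

variable {F : Type} [Field F]

lemma TruncRing.collinearMoment_succ [Finite F] (α g : ℕ) [Fintype (TruncRing F α)]
    [Fintype (TruncRing F (α + 1))] :
    (collinearMoment (TruncRing F (α + 1)) (Fin 3) g : ℤ)
      = ((Nat.card F : ℤ) ^ (3 * (α + 1)) - (Nat.card F : ℤ) ^ (3 * α))
          * (Nat.card F : ℤ) ^ ((α + 1) * g)
        + (Nat.card F : ℤ) ^ (3 * g) * collinearMoment (TruncRing F α) (Fin 3) g := by
  rw [collinearMoment_of_surjective (TruncRing.reduction F α) (TruncRing.reduction_surjective α)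
    (k := Nat.card F) (by rw [TruncRing.card, TruncRing.card, pow_succ'])
    TruncRing.reduction_eq_zero_iff TruncRing.not_isUnit_iff_s6, TruncRing.card, TruncRing.card,
    Fintype.card_fin]
  push_cast
  ring

lemma TruncRing.collinearMoment_mul [Finite F] (α g : ℕ) [inst : Fintype (TruncRing F α)] :
    ((Nat.card F : ℤ) ^ (2 * g) - (Nat.card F : ℤ) ^ 3)
        * collinearMoment (TruncRing F α) (Fin 3) g
      = ((Nat.card F : ℤ) ^ (2 * g) - 1) * (Nat.card F : ℤ) ^ (3 * α * g)
        - ((Nat.card F : ℤ) ^ 3 - 1) * (Nat.card F : ℤ) ^ (α * (g + 3)) := by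
  induction α generalizing inst with
  | zero =>
    have hsub : Subsingleton (TruncRing F 0) :=
      (Nat.card_eq_one_iff_unique.1 (by rw [TruncRing.card, pow_zero])).1
    have h1 (w : Fin 3 → TruncRing F 0) :
        Nat.card {u : Fin 3 → TruncRing F 0 // Collinear₂ w u} = 1 :=
      Nat.card_eq_one_iff_unique.2
        ⟨inferInstance, ⟨⟨0, fun _ _ => Subsingleton.elim _ _⟩⟩⟩
    have h : collinearMoment (TruncRing F 0) (Fin 3) g = 1 := by
      simp [collinearMoment, h1, ← Nat.card_eq_fintype_card]
    rw [h]
    simp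
  | succ α ih =>
    have : Finite (TruncRing F α) := TruncRing.finite α
    have := Fintype.ofFinite (TruncRing F α)
    rw [TruncRing.collinearMoment_succ]
    linear_combination (Nat.card F : ℤ) ^ (3 * g) * ih

end Count

/-- Let `g ≥ 2`, `α ≥ 1`, `𝔽_q` a finite field and `R := 𝔽_q[t]/(t^α)`.
Then the number of pairs `(x,y)` of `g`-tuples of `2×2` matrices over `R` with
`Σ_{i=1}^{g} (x_i y_i − y_i x_i) = 0` equals
`((q^{2g} − 1)·q^{α(8g−3)} − (q³ − 1)·q^{6αg}) / (q³·(q^{2g−3} − 1))`. -/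
theorem gloop_rank_two_moment_fibre_count (g α : ℕ) (hg : 2 ≤ g) (hα : 1 ≤ α)
    (F : Type) [Field F] [Fintype F] :
    (Nat.card {xy : (Fin g → Matrix (Fin 2) (Fin 2) (TruncRing F α)) ×
        (Fin g → Matrix (Fin 2) (Fin 2) (TruncRing F α)) //
        ∑ i : Fin g, (xy.1 i * xy.2 i - xy.2 i * xy.1 i) = 0} : ℚ)
      = (((Fintype.card F : ℚ) ^ (2 * g) - 1) * (Fintype.card F : ℚ) ^ (α * (8 * g - 3))
          - ((Fintype.card F : ℚ) ^ 3 - 1) * (Fintype.card F : ℚ) ^ (6 * α * g))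
        / ((Fintype.card F : ℚ) ^ 3 * ((Fintype.card F : ℚ) ^ (2 * g - 3) - 1)) := by
  obtain ⟨a, rfl⟩ : ∃ a, α = a + 1 := ⟨α - 1, by omega⟩
  obtain ⟨h, rfl⟩ : ∃ h, g = h + 2 := ⟨g - 2, by omega⟩
  have : Finite (TruncRing F (a + 1)) := TruncRing.finite _
  have := Fintype.ofFinite (TruncRing F (a + 1))
  have := Fintype.ofFinite (Matrix (Fin 2) (Fin 2) (TruncRing F (a + 1)))
  obtain ⟨ψ, hψ⟩ := TruncRing.exists_isPrimitive (F := F) a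
  have hN := card_sum_commutator_eq_zero_mul (n := Fin 2) hψ (h + 2)
  have hM : Nat.card (Matrix (Fin 2) (Fin 2) (TruncRing F (a + 1)))
      = (Nat.card F ^ (a + 1)) ^ 4 := by
    rw [Nat.card_congr (Matrix.of (m := Fin 2) (n := Fin 2)).symm, Nat.card_fun, Nat.card_fun,
      TruncRing.card, Nat.card_fin, ← pow_mul]
  rw [sum_card_centralizer_pow, hM, TruncRing.card] at hN
  have hS := TruncRing.collinearMoment_mul (F := F) (a + 1) (h + 2)
  rw [← Nat.card_eq_fintype_card (α := F)]
  have hq : (1 : ℚ) < Nat.card F := by exact_mod_cast Finite.one_lt_card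
  have hNQ := congrArg (Nat.cast (R := ℚ)) hN
  have hSQ := congrArg (Int.cast (R := ℚ)) hS
  push_cast at hNQ hSQ
  generalize (Nat.card {xy : (Fin (h + 2) → Matrix (Fin 2) (Fin 2) (TruncRing F (a + 1))) ×
        (Fin (h + 2) → Matrix (Fin 2) (Fin 2) (TruncRing F (a + 1))) //
        ∑ i : Fin (h + 2), (xy.1 i * xy.2 i - xy.2 i * xy.1 i) = 0} : ℚ) = N at hNQ ⊢
  generalize (collinearMoment (TruncRing F (a + 1)) (Fin 3) (h + 2) : ℚ) = S at hNQ hSQ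
  generalize (Nat.card F : ℚ) = q at hNQ hSQ hq ⊢
  have hq0 : q ≠ 0 := by positivity
  have hden : q ^ 3 * (q ^ (2 * (h + 2) - 3) - 1) ≠ 0 :=
    mul_ne_zero (pow_ne_zero _ hq0) (sub_ne_zero.2 (one_lt_pow₀ hq (by omega)).ne')
  rw [eq_div_iff hden, show 2 * (h + 2) - 3 = 2 * h + 1 by omega,
    show 8 * (h + 2) - 3 = 8 * h + 13 by omega]
  refine mul_right_cancel₀ (pow_ne_zero 4 (pow_ne_zero (a + 1) hq0)) ?_
  linear_combination (q ^ (2 * (h + 2)) - q ^ 3) * hNQ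
    + ((q ^ (a + 1)) ^ 4) ^ (h + 2) * (q ^ (a + 1)) ^ (h + 3) * hSQ
end

section
/- Let Q be a finite quiver, α ≥ 1, r ∈ ℕ^{Q₀} an indivisible rank vector (the gcd of its entries equals 1), and λ ∈ ℤ^{Q₀} generic with respect to r, i.e. Σ_i λ_i r_i = 0 while Σ_i λ_i r'_i ≠ 0 for every r' ∈ ℕ^{Q₀} with r' ≠ 0, r' ≤ r componentwise and r' ≠ r. Let 𝔽_q be a finite field of characteristic p > Σ_i |λ_i| r_i and R := 𝔽_q[t]/(t^α). Then #{ (x,y) : μ(x,y) = (t^{α−1} λ_i · Id_{r_i})_{i∈Q₀} } = #GL_{α,r} · q^{−α⟨r,r⟩} · A_{(Q,α),r}(q) / (1 − q^{−1}), where λ_i · Id_{r_i} denotes the image of the integer λ_i in R times the r_i × r_i identity matrix and #GL_{α,r} = ∏_i #GL_{r_i}(R). -/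
/-- A finite quiver (equivalently, a finite multigraph with a chosen orientation of each
edge): finitely many vertices and arrows, with source and target maps. -/
structure FinQuiver where
  V : Type
  E : Type
  [fintypeV : Fintype V]
  [fintypeE : Fintype E]
  [decEqV : DecidableEq V]
  s : E → V
  t : E → V

attribute [instance] FinQuiver.fintypeV FinQuiver.fintypeE FinQuiver.decEqV

namespace FinQuiver

/-- The adjacency (simple) graph of the underlying multigraph: two vertices are adjacent
if some edge joins them.  Connectivity of the multigraph only depends on this graph. -/
def adjGraph (G : FinQuiver) : SimpleGraph G.V :=
  SimpleGraph.fromRel fun a b => ∃ e : G.E, G.s e = a ∧ G.t e = b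

/-- The number of connected components of the underlying multigraph. -/
noncomputable def c (G : FinQuiver) : ℕ :=
  Nat.card G.adjGraph.ConnectedComponent

/-- The Betti number `b(Q) = c(Q) - #Q₀ + #Q₁` of the underlying multigraph. -/
noncomputable def betti (G : FinQuiver) : ℤ :=
  (G.c : ℤ) - Fintype.card G.V + Fintype.card G.E

/-- The underlying multigraph is connected. -/
def Connected (G : FinQuiver) : Prop := G.adjGraph.Connected

/-- Deletion of the edge `e`. -/
noncomputable def deleteEdge (G : FinQuiver) (e : G.E) : FinQuiver :=
  letI : DecidableEq G.E := Classical.decEq _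
  { V := G.V, E := {e' : G.E // e' ≠ e}, s := fun e' => G.s e'.1, t := fun e' => G.t e'.1 }

/-- The underlying multigraph is 2-connected: it is connected and stays connected after
deleting any single edge. -/
def TwoConnected (G : FinQuiver) : Prop :=
  G.Connected ∧ ∀ e : G.E, (G.deleteEdge e).Connected

/-- Restriction `Q|_I` to a subset `I` of the vertices (full sub(multi)graph). -/
noncomputable def restrictV (G : FinQuiver) (I : Set G.V) : FinQuiver :=
  letI : DecidablePred (· ∈ I) := Classical.decPred _
  { V := ↥I
    E := {e : G.E // G.s e ∈ I ∧ G.t e ∈ I}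
    s := fun e => ⟨G.s e.1, e.2.1⟩
    t := fun e => ⟨G.t e.1, e.2.2⟩ }

/-- Restriction `Q|_J` to a subset `J` of the edges (keeping all vertices). -/
noncomputable def restrictE (G : FinQuiver) (J : Set G.E) : FinQuiver :=
  letI : DecidablePred (· ∈ J) := Classical.decPred _
  { V := G.V
    E := ↥J
    s := fun e => G.s e.1
    t := fun e => G.t e.1 }

end FinQuiver

/-- A locally free representation of rank `r` of the quiver `G` over `R`: a matrix
`x_a` of size `r_{t(a)} × r_{s(a)}` for every arrow `a`. -/
abbrev QRep (G : FinQuiver) (R : Type) [CommRing R] (r : G.V → ℕ) : Type :=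
  ∀ a : G.E, Matrix (Fin (r (G.t a))) (Fin (r (G.s a))) R

/-- The second component of a pair in the doubled quiver: a matrix `y_a` of size
`r_{s(a)} × r_{t(a)}` for every arrow `a`. -/
abbrev QCoRep (G : FinQuiver) (R : Type) [CommRing R] (r : G.V → ℕ) : Type :=
  ∀ a : G.E, Matrix (Fin (r (G.s a))) (Fin (r (G.t a))) R

/-- The moment map of the quiver `G`:
`μ(x,y)_i := Σ_{a : t(a)=i} x_a y_a − Σ_{a : s(a)=i} y_a x_a`. -/
noncomputable def momentMap (G : FinQuiver) {R : Type} [CommRing R] {r : G.V → ℕ}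
    (x : QRep G R r) (y : QCoRep G R r) (i : G.V) : Matrix (Fin (r i)) (Fin (r i)) R :=
  (∑ a : G.E, if h : G.t a = i then
      cast (congrArg (fun v => Matrix (Fin (r v)) (Fin (r v)) R) h) (x a * y a) else 0)
  - ∑ a : G.E, if h : G.s a = i then
      cast (congrArg (fun v => Matrix (Fin (r v)) (Fin (r v)) R) h) (y a * x a) else 0

/-- The Euler form `⟨r,r'⟩ := Σ_{i∈Q₀} r_i r'_i − Σ_{a∈Q₁} r_{s(a)} r'_{t(a)}` of `G`. -/
def eulerForm (G : FinQuiver) (r r' : G.V → ℕ) : ℤ :=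
  ∑ i : G.V, (r i : ℤ) * (r' i : ℤ) - ∑ a : G.E, (r (G.s a) : ℤ) * (r' (G.t a) : ℤ)

/-- The change-of-basis action of `GL_{α,r} = ∏_i GL_{r_i}(R)` on representations:
`(g·x)_a := g_{t(a)} x_a g_{s(a)}⁻¹`. -/
def glAct (G : FinQuiver) {R : Type} [CommRing R] {r : G.V → ℕ}
    (g : ∀ i : G.V, (Matrix (Fin (r i)) (Fin (r i)) R)ˣ) (x : QRep G R r) : QRep G R r :=
  fun a => (g (G.t a) : Matrix (Fin (r (G.t a))) (Fin (r (G.t a))) R) * x a *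
    (((g (G.s a))⁻¹ : (Matrix (Fin (r (G.s a))) (Fin (r (G.s a))) R)ˣ) :
      Matrix (Fin (r (G.s a))) (Fin (r (G.s a))) R)

/-- `A` is block-diagonal for the splittings `m = m' + (m − m')`, `n = n' + (n − n')`:
all entries `A k l` with `(k < m') ↮ (l < n')` vanish. -/
def IsBlockDiag {R : Type} [CommRing R] {m n : ℕ} (m' n' : ℕ)
    (A : Matrix (Fin m) (Fin n) R) : Prop :=
  ∀ (k : Fin m) (l : Fin n), ¬ ((k : ℕ) < m' ↔ (l : ℕ) < n') → A k l = 0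

/-- `r'` is the rank vector of a direct summand of the representation `x`: for some
complementary rank vector `r''` with `r' + r'' = r`, some change of basis `g` makes all
matrices of `x` block-diagonal with diagonal blocks of sizes prescribed by `r'`, `r''`.
(In particular `r' = 0` and `r' = r` always qualify.) -/
def IsSummandRank (G : FinQuiver) {R : Type} [CommRing R] {r : G.V → ℕ}
    (x : QRep G R r) (r' : G.V → ℕ) : Prop :=
  ∃ r'' : G.V → ℕ, (∀ i, r' i + r'' i = r i) ∧
    ∃ g : ∀ i : G.V, (Matrix (Fin (r i)) (Fin (r i)) R)ˣ,
      ∀ a : G.E, IsBlockDiag (r' (G.t a)) (r' (G.s a)) (glAct G g x a)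

/-- `x` is decomposable: it is a direct sum of two representations of nonzero ranks. -/
def Decomposable (G : FinQuiver) {R : Type} [CommRing R] {r : G.V → ℕ}
    (x : QRep G R r) : Prop :=
  ∃ r' r'' : G.V → ℕ, (∀ i, r' i + r'' i = r i) ∧ r' ≠ 0 ∧ r'' ≠ 0 ∧
    ∃ g : ∀ i : G.V, (Matrix (Fin (r i)) (Fin (r i)) R)ˣ,
      ∀ a : G.E, IsBlockDiag (r' (G.t a)) (r' (G.s a)) (glAct G g x a)

/-- `x` is absolutely indecomposable: for every finite field extension `K` of `F`, the
representation obtained by applying `𝔽_q[t]/(t^α) → K[t]/(t^α)` entrywise is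
indecomposable. -/
def AbsIndec (G : FinQuiver) (F : Type) [Field F] (α : ℕ) {r : G.V → ℕ}
    (x : QRep G (TruncRing F α) r) : Prop :=
  ∀ (K : Type) [Field K] [Algebra F K] [FiniteDimensional F K],
    ¬ Decomposable G (fun a => (x a).map (truncMap (algebraMap F K) α))

/-- `A_{(Q,α),r}(q)`: the number of `GL_{α,r}`-orbits of absolutely indecomposable locally
free representations of rank `r` of `Q` over `R = 𝔽_q[t]/(t^α)`. -/
noncomputable def KacCountRank (G : FinQuiver) (F : Type) [Field F] [Fintype F]
    (α : ℕ) (r : G.V → ℕ) : ℕ :=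
  Nat.card (Quot (fun x y : {x : QRep G (TruncRing F α) r // AbsIndec G F α x} =>
    ∃ g : ∀ i : G.V, (Matrix (Fin (r i)) (Fin (r i)) (TruncRing F α))ˣ,
      glAct G g x.1 = y.1))

namespace FinQuiver

open Polynomial

section TruncRing

variable {F : Type} [Field F] {α : ℕ}

/-- Reduction modulo `t`, i.e. evaluation of a truncated polynomial at `t = 0`. -/
noncomputable def truncEval (F : Type) [Field F] {α : ℕ} (hα : α ≠ 0) : TruncRing F α →ₐ[F] F :=
  Ideal.Quotient.liftₐ _ (Polynomial.aeval (0 : F)) (by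
    intro a ha
    obtain ⟨c, rfl⟩ := Ideal.mem_span_singleton.1 ha
    simp [hα])

theorem truncEval_mk (hα : α ≠ 0) (p : F[X]) :
    truncEval F hα (Ideal.Quotient.mk _ p) = p.eval 0 := by
  simp [truncEval, Ideal.Quotient.liftₐ_apply]

theorem tvar_pow_ne_zero (hα : α ≠ 0) : tvar F α ^ (α - 1) ≠ 0 := by
  rw [tvar, ← map_pow, Ne, Ideal.Quotient.eq_zero_iff_mem, Ideal.mem_span_singleton,
    Polynomial.X_pow_dvd_iff]
  intro h
  simpa using h (α - 1) (by omega)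

instance truncRing_finiteDimensional : FiniteDimensional F (TruncRing F α) :=
  (Polynomial.monic_X_pow α).finite_quotient

theorem finrank_truncRing : Module.finrank F (TruncRing F α) = α :=
  finrank_quotient_span_eq_natDegree.trans (Polynomial.natDegree_X_pow α)

theorem nontrivial_truncRing (hα : α ≠ 0) : Nontrivial (TruncRing F α) :=
  nontrivial_of_ne _ _ (tvar_pow_ne_zero (F := F) hα)

theorem dvd_tvar_pow_of_ne_zero {a : TruncRing F α} (ha : a ≠ 0) :
    a ∣ tvar F α ^ (α - 1) := by
  obtain ⟨p, rfl⟩ := Ideal.Quotient.mk_surjective a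
  rw [Ne, Ideal.Quotient.eq_zero_iff_mem, Ideal.mem_span_singleton] at ha
  have hp : p ≠ 0 := by rintro rfl; simp at ha
  obtain ⟨u, hu, hXu⟩ := Polynomial.exists_eq_pow_rootMultiplicity_mul_and_not_dvd p hp 0
  rw [Polynomial.C_0, sub_zero] at hu hXu
  set k := p.rootMultiplicity 0
  have hk : k < α := by
    by_contra h
    exact ha (hu ▸ Dvd.dvd.mul_right (pow_dvd_pow _ (not_lt.1 h)) _)
  obtain ⟨b, c, hbc⟩ : IsCoprime (X ^ α) u :=
    ((Polynomial.irreducible_X.coprime_iff_not_dvd).2 hXu).pow_left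
  refine ⟨Ideal.Quotient.mk _ (c * X ^ (α - 1 - k)), ?_⟩
  rw [tvar, ← map_pow, ← map_mul, Ideal.Quotient.eq, Ideal.mem_span_singleton]
  refine ⟨b * X ^ (α - 1), ?_⟩
  have hX : (X : F[X]) ^ (α - 1) = X ^ k * X ^ (α - 1 - k) := by
    rw [← pow_add]; congr 1; omega
  calc _ = (b * X ^ α + c * u) * X ^ (α - 1) - p * (c * X ^ (α - 1 - k)) := by rw [hbc, one_mul]
    _ = _ := by rw [hX]; linear_combination (-(c * X ^ (α - 1 - k))) * hu

theorem isNilpotent_of_truncEval_eq_zero (hα : α ≠ 0) {a : TruncRing F α}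
    (ha : truncEval F hα a = 0) : IsNilpotent a := by
  obtain ⟨p, rfl⟩ := Ideal.Quotient.mk_surjective a
  rw [truncEval_mk, ← Polynomial.coeff_zero_eq_eval_zero, ← Polynomial.X_dvd_iff] at ha
  refine ⟨α, ?_⟩
  rw [← map_pow, Ideal.Quotient.eq_zero_iff_mem, Ideal.mem_span_singleton]
  exact pow_dvd_pow_of_dvd ha α

theorem tvar_pow_mul (hα : α ≠ 0) (a : TruncRing F α) :
    tvar F α ^ (α - 1) * a = algebraMap F _ (truncEval F hα a) * tvar F α ^ (α - 1) := by
  obtain ⟨p, rfl⟩ := Ideal.Quotient.mk_surjective a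
  have h : algebraMap F (TruncRing F α) (p.eval 0) = Ideal.Quotient.mk _ (C (p.eval 0)) := rfl
  rw [truncEval_mk, h, tvar, ← map_pow, ← map_mul, ← map_mul, Ideal.Quotient.eq,
    Ideal.mem_span_singleton]
  obtain ⟨q, hq⟩ : X ∣ p - C (p.eval 0) := by
    rw [Polynomial.X_dvd_iff]; simp [Polynomial.coeff_zero_eq_eval_zero]
  refine ⟨q, ?_⟩
  calc _ = X ^ (α - 1) * (p - C (p.eval 0)) := by ring
    _ = X ^ (α - 1 + 1) * q := by rw [hq]; ring
    _ = _ := by rw [Nat.sub_add_cancel (Nat.pos_of_ne_zero hα)]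

theorem isLocalRing_truncRing (hα : α ≠ 0) : IsLocalRing (TruncRing F α) := by
  have := nontrivial_truncRing (F := F) hα
  have key : ∀ a : TruncRing F α, truncEval F hα a ≠ 0 → IsUnit a := by
    intro a ha
    have hn : IsNilpotent (a - algebraMap F _ (truncEval F hα a)) :=
      isNilpotent_of_truncEval_eq_zero hα (by simp)
    have := hn.isUnit_add_left_of_commute ((isUnit_iff_ne_zero.2 ha).map (algebraMap F _))
      (Commute.all _ _)
    simpa using this
  refine IsLocalRing.of_isUnit_or_isUnit_one_sub_self fun a => ?_
  by_cases ha : truncEval F hα a = 0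
  · exact Or.inr (key _ (by simp [ha]))
  · exact Or.inl (key _ ha)

variable {K : Type} [Field K] (φ : F →+* K)

theorem truncMap_tvar : truncMap φ α (tvar F α) = tvar K α := by
  simp [truncMap, tvar]

theorem truncMap_injective (hα : α ≠ 0) : Function.Injective (truncMap φ α) := by
  refine (injective_iff_map_eq_zero _).2 fun a ha => ?_
  by_contra h
  have := map_dvd (truncMap φ α) (dvd_tvar_pow_of_ne_zero h)
  rw [ha, zero_dvd_iff, map_pow, truncMap_tvar] at this
  exact tvar_pow_ne_zero hα this

theorem truncEval_truncMap (hα : α ≠ 0) (a : TruncRing F α) :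
    truncEval K hα (truncMap φ α a) = φ (truncEval F hα a) := by
  obtain ⟨p, rfl⟩ := Ideal.Quotient.mk_surjective a
  have : truncMap φ α (Ideal.Quotient.mk _ p) = Ideal.Quotient.mk _ (p.map φ) := by
    simp [truncMap]
  rw [this, truncEval_mk, truncEval_mk, Polynomial.eval_zero_map]

theorem truncMap_algebraMap (c : F) :
    truncMap φ α (algebraMap F _ c) = algebraMap K _ (φ c) := by
  have h : algebraMap F (TruncRing F α) c = Ideal.Quotient.mk _ (Polynomial.C c) := rfl
  have h' : algebraMap K (TruncRing K α) (φ c) = Ideal.Quotient.mk _ (Polynomial.C (φ c)) := rfl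
  rw [h, h']
  simp [truncMap]

end TruncRing

section Generalities

theorem exists_pow_isIdempotentElem {M : Type*} [Monoid M] [Finite M] (a : M) :
    ∃ n : ℕ, n ≠ 0 ∧ IsIdempotentElem (a ^ n) := by
  obtain ⟨i, j, hij, h⟩ := Finite.exists_ne_map_eq_of_infinite (fun n : ℕ => a ^ n)
  wlog hlt : i < j generalizing i j
  · exact this j i hij.symm h.symm (by omega)
  obtain ⟨d, rfl⟩ := Nat.exists_eq_add_of_lt hlt
  replace h : a ^ i = a ^ (i + d + 1) := h
  have step : ∀ m k, i ≤ m → a ^ (m + k * (d + 1)) = a ^ m := by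
    intro m k hm
    induction k with
    | zero => simp
    | succ k ih =>
      obtain ⟨e, rfl⟩ := Nat.exists_eq_add_of_le hm
      rw [← ih, show i + e + (k + 1) * (d + 1) = (i + d + 1) + (e + k * (d + 1)) by ring, pow_add,
        ← h, ← pow_add, add_assoc]
  refine ⟨(i + 1) * (d + 1), by positivity, ?_⟩
  rw [IsIdempotentElem, ← pow_add, step _ _ (by nlinarith)]

open Module in
theorem exists_diagonalization_of_isIdempotentElem {A : Type*} [CommRing A] [IsLocalRing A] {n : ℕ}
    {e : Matrix (Fin n) (Fin n) A} (he : IsIdempotentElem e) :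
    ∃ (m : ℕ) (g : (Matrix (Fin n) (Fin n) A)ˣ), m ≤ n ∧
      g.val * e * g⁻¹.val =
        Matrix.diagonal fun k : Fin n => if (k : ℕ) < m then 1 else 0 := by
  set f := Matrix.toLin' e with hf
  have hfi : IsIdempotentElem f := by
    rw [IsIdempotentElem, hf, Module.End.mul_eq_comp, ← Matrix.toLin'_mul, he.eq]
  have hc : IsCompl (LinearMap.range f) (LinearMap.ker f) :=
    LinearMap.IsIdempotentElem.isCompl hfi
  have hproj : ∀ {P Q : Submodule A (Fin n → A)}, IsCompl P Q →
      Module.Free A P ∧ Module.Finite A P := by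
    intro P Q h
    have : Module.Projective A P := Module.Projective.of_split P.subtype (P.projectionOnto Q h)
      (Submodule.projectionOnto_comp_subtype h)
    have : Module.Finite A P := Module.Finite.of_surjective (P.projectionOnto Q h)
      (Submodule.projectionOnto_surjective h)
    exact ⟨Module.free_of_flat_of_isLocalRing, this⟩
  obtain ⟨_, _⟩ := hproj hc
  obtain ⟨_, _⟩ := hproj hc.symm
  set m := finrank A (LinearMap.range f)
  set m' := finrank A (LinearMap.ker f)
  have hmn : m + m' = n := by
    have := (Submodule.prodEquivOfIsCompl _ _ hc).finrank_eq
    rwa [finrank_prod, finrank_fin_fun] at this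
  let E : Fin m ⊕ Fin m' ≃ Fin n := finSumFinEquiv.trans (finCongr hmn)
  let b : Basis (Fin n) A (Fin n → A) :=
    (((finBasis A (LinearMap.range f)).prod (finBasis A (LinearMap.ker f))).map
      (Submodule.prodEquivOfIsCompl _ _ hc)).reindex E
  have hb : ∀ k, f (b k) = if (k : ℕ) < m then b k else 0 := by
    intro k
    obtain ⟨k, rfl⟩ := E.surjective k
    rcases k with k | k
    · obtain ⟨v, hv⟩ := (finBasis A (LinearMap.range f) k).2
      have h : b (E (Sum.inl k)) = f v := by simp [b, hv]
      have h' : f (f v) = f v := LinearMap.congr_fun hfi v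
      rw [h, h', if_pos (by simp [E])]
    · have h : f (b (E (Sum.inr k))) = 0 := by simp [b]
      rw [h, if_neg (by simp [E])]
  refine ⟨m, ⟨b.toMatrix (Pi.basisFun A (Fin n)), (Pi.basisFun A (Fin n)).toMatrix b,
    b.toMatrix_mul_toMatrix_flip _, (Pi.basisFun A (Fin n)).toMatrix_mul_toMatrix_flip _⟩,
    by omega, ?_⟩
  have h := basis_toMatrix_mul_linearMap_toMatrix_mul_basis_toMatrix
    b (Pi.basisFun A (Fin n)) b (Pi.basisFun A (Fin n)) f
  rw [LinearMap.toMatrix_eq_toMatrix', hf, LinearMap.toMatrix'_toLin'] at h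
  refine h.trans ?_
  ext k l
  rw [LinearMap.toMatrix_apply, ← hf, hb, Matrix.diagonal_apply]
  by_cases hl : (l : ℕ) < m <;> by_cases hkl : k = l <;>
    simp [hl, hkl]

end Generalities

section Representations

variable {G : FinQuiver} {R : Type} [CommRing R] {r : G.V → ℕ}

/-- The ring `∏ᵢ Mat_{rᵢ}(R)`. -/
abbrev QMat (G : FinQuiver) (R : Type) [CommRing R] (r : G.V → ℕ) : Type :=
  ∀ i : G.V, Matrix (Fin (r i)) (Fin (r i)) R

/-- The endomorphism algebra of a locally free representation. -/
def endAlg (x : QRep G R r) : Subalgebra R (QMat G R r) where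
  carrier := {ξ | ∀ a, ξ (G.t a) * x a = x a * ξ (G.s a)}
  mul_mem' {ξ η} hξ hη a := by
    rw [Pi.mul_apply, Pi.mul_apply, Matrix.mul_assoc, hη a, ← Matrix.mul_assoc, hξ a,
      Matrix.mul_assoc]
  add_mem' {ξ η} hξ hη a := by
    rw [Pi.add_apply, Pi.add_apply, Matrix.add_mul, Matrix.mul_add, hξ a, hη a]
  algebraMap_mem' c a := by
    simp [Algebra.algebraMap_eq_smul_one]

theorem mem_endAlg {x : QRep G R r} {ξ : QMat G R r} :
    ξ ∈ endAlg x ↔ ∀ a, ξ (G.t a) * x a = x a * ξ (G.s a) := Iff.rfl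

theorem glAct_one (x : QRep G R r) : glAct G 1 x = x := by
  funext a; simp [glAct]

theorem glAct_mul (g h : ∀ i : G.V, (Matrix (Fin (r i)) (Fin (r i)) R)ˣ) (x : QRep G R r) :
    glAct G (g * h) x = glAct G g (glAct G h x) := by
  funext a; simp [glAct, Matrix.mul_assoc]

theorem glAct_eq_self_iff (g : ∀ i : G.V, (Matrix (Fin (r i)) (Fin (r i)) R)ˣ) (x : QRep G R r) :
    glAct G g x = x ↔ (fun i => (g i : Matrix (Fin (r i)) (Fin (r i)) R)) ∈ endAlg x := by
  rw [mem_endAlg, funext_iff]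
  refine forall_congr' fun a => ⟨fun h => ?_, fun h => ?_⟩
  · nth_rw 2 [← h]
    simp [glAct, Matrix.mul_assoc]
  · simp only [glAct]
    rw [h, Matrix.mul_assoc]
    simp

theorem mem_endAlg_glAct_iff (g : ∀ i : G.V, (Matrix (Fin (r i)) (Fin (r i)) R)ˣ)
    (x : QRep G R r) (ξ : QMat G R r) :
    ξ ∈ endAlg (glAct G g x) ↔
      (fun i => ((g i)⁻¹ : (Matrix (Fin (r i)) (Fin (r i)) R)ˣ) * ξ i * g i) ∈ endAlg x := by
  rw [mem_endAlg, mem_endAlg]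
  refine forall_congr' fun a => ⟨fun h => ?_, fun h => ?_⟩
  · have h' := congrArg (fun M : Matrix (Fin (r (G.t a))) (Fin (r (G.s a))) R =>
      (g (G.t a))⁻¹.val * M * (g (G.s a)).val) h
    simpa [glAct, Matrix.mul_assoc] using h'
  · have h' := congrArg (fun M : Matrix (Fin (r (G.t a))) (Fin (r (G.s a))) R =>
      (g (G.t a)).val * M * (g (G.s a))⁻¹.val) h
    simpa [glAct, Matrix.mul_assoc] using h'

theorem Decomposable.of_glAct {g : ∀ i : G.V, (Matrix (Fin (r i)) (Fin (r i)) R)ˣ}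
    {x : QRep G R r} (h : Decomposable G (glAct G g x)) : Decomposable G x := by
  obtain ⟨r', r'', hr, h', h'', g', hg'⟩ := h
  exact ⟨r', r'', hr, h', h'', g' * g, by rwa [glAct_mul]⟩

/-- The idempotent of `∏ᵢ Mat_{rᵢ}(R)` projecting onto the first `r'ᵢ` coordinates. -/
def blockIdem (R : Type) [CommRing R] {G : FinQuiver} (r r' : G.V → ℕ) : QMat G R r :=
  fun i => Matrix.diagonal fun k => if (k : ℕ) < r' i then 1 else 0

theorem isBlockDiag_iff {m n m' n' : ℕ} {A : Matrix (Fin m) (Fin n) R} :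
    IsBlockDiag m' n' A ↔
      (Matrix.diagonal fun k : Fin m => if (k : ℕ) < m' then (1 : R) else 0) * A =
        A * Matrix.diagonal fun k : Fin n => if (k : ℕ) < n' then (1 : R) else 0 := by
  rw [← Matrix.ext_iff, IsBlockDiag]
  refine forall_congr' fun k => forall_congr' fun l => ?_
  rw [Matrix.diagonal_mul, Matrix.mul_diagonal]
  by_cases hk : (k : ℕ) < m' <;> by_cases hl : (l : ℕ) < n' <;> simp [hk, hl, eq_comm]

theorem isBlockDiag_iff_blockIdem_mem {x : QRep G R r} {r' : G.V → ℕ} :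
    (∀ a, IsBlockDiag (r' (G.t a)) (r' (G.s a)) (x a)) ↔ blockIdem R r r' ∈ endAlg x :=
  forall_congr' fun _ => isBlockDiag_iff

theorem trace_blockIdem {r' : G.V → ℕ} (i : G.V) (h : r' i ≤ r i) :
    (blockIdem R r r' i).trace = r' i := by
  rw [blockIdem, Matrix.trace_diagonal, Finset.sum_ite, Finset.sum_const_zero, add_zero,
    Finset.sum_const, nsmul_one]
  congr 1
  rw [Fin.card_filter_val_lt, min_eq_right h]

theorem Decomposable.of_isIdempotentElem [IsLocalRing R] {x : QRep G R r} {e : QMat G R r}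
    (he : IsIdempotentElem e) (hx : e ∈ endAlg x) (h0 : e ≠ 0) (h1 : e ≠ 1) :
    Decomposable G x := by
  have hei : ∀ i, IsIdempotentElem (e i) := fun i => congrFun he i
  choose r' g hr' hg using fun i => exists_diagonalization_of_isIdempotentElem (hei i)
  have hconj : ∀ i, e i = ((g i)⁻¹ : (Matrix (Fin (r i)) (Fin (r i)) R)ˣ) *
      blockIdem R r r' i * g i := by
    intro i
    rw [blockIdem, ← hg i]
    simp [mul_assoc]
  refine ⟨r', fun i => r i - r' i, fun i => Nat.add_sub_of_le (hr' i), ?_, ?_, g, ?_⟩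
  · rintro rfl
    refine h0 (funext fun i => ?_)
    rw [hconj, blockIdem]
    simp
  · intro h
    refine h1 (funext fun i => ?_)
    have hb : blockIdem R r r' i = 1 := by
      have hi : r i ≤ r' i := Nat.sub_eq_zero_iff_le.1 (congrFun h i)
      rw [blockIdem, ← Matrix.diagonal_one]
      congr 1
      funext k
      exact if_pos (k.2.trans_le hi)
    rw [hconj, hb]
    simp
  · rw [isBlockDiag_iff_blockIdem_mem, mem_endAlg_glAct_iff]
    simpa only [← hconj] using hx

theorem Decomposable.exists_mem_endAlg_trace {x : QRep G R r} (h : Decomposable G x) :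
    ∃ r' : G.V → ℕ, r' ≠ 0 ∧ (∀ i, r' i ≤ r i) ∧ r' ≠ r ∧
      ∃ e ∈ endAlg x, ∀ i, (e i).trace = r' i := by
  obtain ⟨r', r'', hr, h', h'', g, hg⟩ := h
  have hle : ∀ i, r' i ≤ r i := fun i => (hr i) ▸ Nat.le_add_right _ _
  refine ⟨r', h', hle, ?_, _,
    (mem_endAlg_glAct_iff g x _).1 (isBlockDiag_iff_blockIdem_mem.1 hg), fun i => ?_⟩
  · rintro rfl
    exact h'' (funext fun i => by simpa using hr i)
  · rw [Matrix.trace_mul_comm, ← Matrix.mul_assoc]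
    simp [trace_blockIdem i (hle i)]

theorem momentMap_eq_sum_single (x : QRep G R r) (y : QCoRep G R r) :
    momentMap G x y = ∑ a, Pi.single (M := fun i => Matrix (Fin (r i)) (Fin (r i)) R)
        (G.t a) (x a * y a) -
      ∑ a, Pi.single (M := fun i => Matrix (Fin (r i)) (Fin (r i)) R) (G.s a) (y a * x a) := by
  have key : ∀ (j : G.V) (M : Matrix (Fin (r j)) (Fin (r j)) R) (i : G.V),
      (if h : j = i then
        cast (congrArg (fun v => Matrix (Fin (r v)) (Fin (r v)) R) h) M else 0) =
      Pi.single (M := fun i => Matrix (Fin (r i)) (Fin (r i)) R) j M i := by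
    intro j M i
    by_cases h : j = i
    · subst h; simp
    · rw [dif_neg h, Pi.single_eq_of_ne (Ne.symm h)]
  funext i
  simp only [momentMap, key, Pi.sub_apply, Finset.sum_apply]

theorem sum_trace_mul_momentMap (ξ : QMat G R r) (x : QRep G R r) (y : QCoRep G R r) :
    ∑ i, (ξ i * momentMap G x y i).trace =
      ∑ a, ((ξ (G.t a) * x a - x a * ξ (G.s a)) * y a).trace := by
  have key : ∀ (j : G.V) (M : Matrix (Fin (r j)) (Fin (r j)) R),
      ∑ i, (ξ i * Pi.single (M := fun i => Matrix (Fin (r i)) (Fin (r i)) R) j M i).trace =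
        (ξ j * M).trace := by
    intro j M
    rw [Finset.sum_eq_single j (fun i _ hi => by rw [Pi.single_eq_of_ne hi]; simp) (by simp),
      Pi.single_eq_same]
  simp only [momentMap_eq_sum_single, Pi.sub_apply, Finset.sum_apply, mul_sub, Finset.mul_sum,
    Matrix.trace_sub, Matrix.trace_sum, Finset.sum_sub_distrib]
  refine (congrArg₂ (· - ·) Finset.sum_comm Finset.sum_comm).trans ?_
  simp only [key, ← Finset.sum_sub_distrib]
  refine Finset.sum_congr rfl fun a _ => ?_
  rw [Matrix.sub_mul, Matrix.trace_sub, ← Matrix.mul_assoc (ξ (G.t a)),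
    ← Matrix.mul_assoc (ξ (G.s a)), Matrix.trace_mul_comm _ (x a), ← Matrix.mul_assoc (x a)]

/-- The moment map as a linear map in its second argument. -/
noncomputable def momentLin (x : QRep G R r) : QCoRep G R r →ₗ[R] QMat G R r where
  toFun y := momentMap G x y
  map_add' y z := by
    simp only [momentMap_eq_sum_single, Pi.add_apply, Matrix.mul_add, Matrix.add_mul,
      Pi.single_add, Finset.sum_add_distrib]
    abel
  map_smul' c y := by
    simp only [momentMap_eq_sum_single, Pi.smul_apply, Matrix.mul_smul, Matrix.smul_mul,
      Pi.single_smul, ← Finset.smul_sum, smul_sub, RingHom.id_apply]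

variable {R' : Type} [CommRing R'] (φ : R →+* R')

/-- Entrywise extension of scalars `∏ᵢ Mat_{rᵢ}(R) → ∏ᵢ Mat_{rᵢ}(R')`. -/
noncomputable def qmatMap (r : G.V → ℕ) : QMat G R r →+* QMat G R' r :=
  RingHom.pi fun i => φ.mapMatrix.comp (Pi.evalRingHom _ i)

theorem qmatMap_apply (ξ : QMat G R r) (i : G.V) : qmatMap φ r ξ i = (ξ i).map φ := rfl

theorem qmatMap_mem_endAlg {x : QRep G R r} {ξ : QMat G R r} (h : ξ ∈ endAlg x) :
    qmatMap φ r ξ ∈ endAlg (G := G) (r := r) (fun a => (x a).map φ) := by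
  intro a
  rw [qmatMap_apply, qmatMap_apply, ← Matrix.map_mul, h a, Matrix.map_mul]

theorem momentMap_map (x : QRep G R r) (y : QCoRep G R r) (i : G.V) :
    momentMap G (fun a => (x a).map φ) (fun a => (y a).map φ) i = (momentMap G x y i).map φ := by
  have key : ∀ (j : G.V) (M : Matrix (Fin (r j)) (Fin (r j)) R),
      qmatMap φ r (Pi.single (M := fun i => Matrix (Fin (r i)) (Fin (r i)) R) j M) =
        Pi.single (M := fun i => Matrix (Fin (r i)) (Fin (r i)) R') j (M.map φ) := by
    intro j M
    funext i
    rw [qmatMap_apply]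
    by_cases h : i = j
    · subst h; simp
    · rw [Pi.single_eq_of_ne h, Pi.single_eq_of_ne h]; simp
  rw [← qmatMap_apply, momentMap_eq_sum_single, momentMap_eq_sum_single, map_sub, map_sum, map_sum]
  simp only [key, Matrix.map_mul]

theorem glAct_map (g : ∀ i : G.V, (Matrix (Fin (r i)) (Fin (r i)) R)ˣ) (x : QRep G R r) :
    (fun a => (glAct G g x a).map φ) =
      glAct G (fun i => Units.map φ.mapMatrix.toMonoidHom (g i)) (fun a => (x a).map φ) := by
  funext a
  simp only [glAct, Matrix.map_mul]
  rfl

end Representations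

section AbsIndec

variable {G : FinQuiver} {F : Type} [Field F] {α : ℕ} {r : G.V → ℕ}

theorem isNilpotent_or_isUnit_of_not_decomposable {R : Type} [CommRing R] [Finite R]
    [IsLocalRing R] {x : QRep G R r} (hx : ¬ Decomposable G x) {b : QMat G R r}
    (hb : b ∈ endAlg x) : IsNilpotent b ∨ IsUnit b := by
  obtain ⟨n, hn, hidem⟩ := exists_pow_isIdempotentElem b
  by_cases h0 : b ^ n = 0
  · exact Or.inl ⟨n, h0⟩
  by_cases h1 : b ^ n = 1
  · exact Or.inr (IsUnit.of_pow_eq_one h1 hn)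
  · exact absurd (Decomposable.of_isIdempotentElem hidem (pow_mem hb n) h0 h1) hx

theorem isUnit_aeval_prod_X_sub_C {K S : Type*} [Field K] [Ring S] [Algebra K S] (a : S)
    (s : Multiset K) (h : ∀ c ∈ s, IsUnit (a - algebraMap K S c)) :
    IsUnit (aeval a (s.map fun c => X - C c).prod) := by
  induction s using Multiset.induction with
  | empty => simp
  | cons c s ih =>
    rw [Multiset.map_cons, Multiset.prod_cons, map_mul]
    refine IsUnit.mul ?_ (ih fun d hd => h d (Multiset.mem_cons_of_mem hd))
    simpa using h c (Multiset.mem_cons_self c s)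

theorem exists_isNilpotent_sub_of_not_decomposable [Finite F] (hα : α ≠ 0) (hr : r ≠ 0)
    {x : QRep G (TruncRing F α) r} (hx : ¬ Decomposable G x) {ξ : QMat G (TruncRing F α) r}
    (hξ : ξ ∈ endAlg x) {P : F[X]} (hP : P.Monic) (hsplit : P.Splits) (h0 : aeval ξ P = 0) :
    ∃ c : F, IsNilpotent (ξ - algebraMap F _ c) := by
  have := isLocalRing_truncRing (F := F) hα
  have : Finite (TruncRing F α) := Module.finite_of_finite F
  have : Nontrivial (QMat G (TruncRing F α) r) := by
    obtain ⟨i, hi⟩ := Function.ne_iff.1 hr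
    have : Nonempty (Fin (r i)) := ⟨⟨0, Nat.pos_of_ne_zero hi⟩⟩
    exact Pi.nontrivial_at i
  by_contra! hc
  rw [hsplit.eq_prod_roots_of_monic hP] at h0
  refine not_isUnit_zero (h0 ▸ isUnit_aeval_prod_X_sub_C ξ P.roots fun c _ => ?_)
  have hmem : ξ - algebraMap F _ c ∈ endAlg x :=
    sub_mem hξ ((endAlg x).algebraMap_mem (algebraMap F (TruncRing F α) c))
  exact (isNilpotent_or_isUnit_of_not_decomposable hx hmem).resolve_left (hc c)

/-- The additive functional `ξ ↦ Σᵢ nᵢ tr(ξᵢ) mod t`. -/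
noncomputable def traceFunctional (F : Type) [Field F] {α : ℕ} (hα : α ≠ 0) (r : G.V → ℕ)
    (n : G.V → ℤ) : QMat G (TruncRing F α) r →+ F where
  toFun ξ := truncEval F hα (∑ i, (n i : TruncRing F α) * (ξ i).trace)
  map_zero' := by simp
  map_add' ξ η := by simp [mul_add, Finset.sum_add_distrib]

theorem traceFunctional_apply (hα : α ≠ 0) (n : G.V → ℤ) (ξ : QMat G (TruncRing F α) r) :
    traceFunctional F hα r n ξ = ∑ i, (n i : F) * truncEval F hα (ξ i).trace := by
  simp [traceFunctional]

theorem traceFunctional_eq (hα : α ≠ 0) {ξ : QMat G (TruncRing F α) r} {c : F}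
    (h : IsNilpotent (ξ - algebraMap F _ c)) (n : G.V → ℤ) :
    traceFunctional F hα r n ξ = c * ((∑ i, n i * (r i : ℤ) : ℤ) : F) := by
  have key : ∀ i, truncEval F hα (ξ i).trace = c * (r i : F) := by
    intro i
    have hi : IsNilpotent (ξ i - algebraMap F _ c) :=
      h.map (Pi.evalRingHom (fun i => Matrix (Fin (r i)) (Fin (r i)) (TruncRing F α)) i)
    have := ((Matrix.isNilpotent_trace_of_isNilpotent hi).map (truncEval F hα)).eq_zero
    rw [Matrix.trace_sub, Matrix.algebraMap_eq_diagonal, Matrix.trace_diagonal, map_sub,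
      sub_eq_zero] at this
    simpa [mul_comm] using this
  rw [traceFunctional_apply, Int.cast_sum, Finset.mul_sum]
  refine Finset.sum_congr rfl fun i _ => ?_
  rw [key]; push_cast; ring

theorem AbsIndec.isNilpotent_sub [Finite F] (hα : α ≠ 0) {x : QRep G (TruncRing F α) r}
    (hx : AbsIndec G F α x) {n : G.V → ℤ} (hn : ∑ i, n i * (r i : ℤ) = 1)
    {ξ : QMat G (TruncRing F α) r} (hξ : ξ ∈ endAlg x) :
    IsNilpotent (ξ - algebraMap F _ (traceFunctional F hα r n ξ)) := by
  have hξint : IsIntegral F ξ := Algebra.IsIntegral.isIntegral ξ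
  set K := (minpoly F ξ).SplittingField
  have : Finite K := Module.finite_of_finite F
  set φ := truncMap (algebraMap F K) α
  have halg : (qmatMap φ r).comp (algebraMap F (QMat G _ r)) =
      (algebraMap K (QMat G _ r)).comp (algebraMap F K) := by
    ext c i k l
    by_cases hkl : k = l <;>
      simp [qmatMap_apply, Matrix.algebraMap_matrix_apply, hkl, φ, truncMap_algebraMap]
  have hr : r ≠ 0 := by rintro rfl; simp at hn
  obtain ⟨c, hc⟩ := exists_isNilpotent_sub_of_not_decomposable hα hr (hx K)
    (qmatMap_mem_endAlg φ hξ) ((minpoly.monic hξint).map (algebraMap F K))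
    (SplittingField.splits (minpoly F ξ)) (by
      rw [aeval_def, eval₂_map, ← halg, ← hom_eval₂, ← aeval_def, minpoly.aeval, map_zero])
  have hτ : algebraMap F K (traceFunctional F hα r n ξ) = c := by
    have h := traceFunctional_eq hα hc n
    rw [hn, Int.cast_one, mul_one, traceFunctional_apply] at h
    rw [← h, traceFunctional_apply, map_sum]
    refine Finset.sum_congr rfl fun i _ => ?_
    rw [map_mul, map_intCast, ← truncEval_truncMap, qmatMap_apply]
    congr 2
    exact AddMonoidHom.map_trace φ (ξ i)
  have hinj : Function.Injective (qmatMap φ r) := by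
    intro a b hab
    ext i k l
    exact truncMap_injective (algebraMap F K) hα (congrFun (congrFun (congrFun hab i) k) l)
  rw [← IsNilpotent.map_iff hinj, map_sub, ← RingHom.comp_apply, halg, RingHom.comp_apply, hτ]
  exact hc

theorem AbsIndec.isUnit_iff [Finite F] (hα : α ≠ 0) {x : QRep G (TruncRing F α) r}
    (hx : AbsIndec G F α x) {n : G.V → ℤ} (hn : ∑ i, n i * (r i : ℤ) = 1)
    {ξ : QMat G (TruncRing F α) r} (hξ : ξ ∈ endAlg x) :
    IsUnit ξ ↔ traceFunctional F hα r n ξ ≠ 0 := by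
  have hnil := AbsIndec.isNilpotent_sub hα hx hn hξ
  constructor
  · intro hu h0
    rw [h0, map_zero, sub_zero] at hnil
    have h1 := traceFunctional_eq hα (ξ := (1 : QMat G (TruncRing F α) r)) (c := 1) (by simp) n
    obtain ⟨k, hk⟩ := hnil
    have h01 : (1 : QMat G (TruncRing F α) r) = 0 := by
      have := hu.pow k
      rw [hk, isUnit_zero_iff] at this
      exact this.symm
    rw [hn, h01, map_zero] at h1
    simp at h1
  · intro h
    have := hnil.isUnit_add_left_of_commute
      ((isUnit_iff_ne_zero.2 h).map (algebraMap F (QMat G (TruncRing F α) r)))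
      (Algebra.commutes _ _).symm
    simpa using this

theorem trace_mul_smul_one {R : Type} [CommRing R] {m : ℕ} (e : Matrix (Fin m) (Fin m) R)
    (c : R) : (e * (c • (1 : Matrix (Fin m) (Fin m) R))).trace = c * e.trace := by
  rw [Matrix.mul_smul, mul_one, Matrix.trace_smul, smul_eq_mul]

theorem map_smul_one {R R' : Type} [CommRing R] [CommRing R'] (φ : R →+* R') {m : ℕ} (c : R) :
    (c • (1 : Matrix (Fin m) (Fin m) R)).map φ = φ c • (1 : Matrix (Fin m) (Fin m) R') := by
  rw [Matrix.map_smul' _ _ _ (map_mul φ), Matrix.map_one _ (map_zero φ) (map_one φ)]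

theorem absIndec_of_momentMap_eq (hα : α ≠ 0) (lam : G.V → ℤ)
    (hgen : ∀ r' : G.V → ℕ, r' ≠ 0 → (∀ i, r' i ≤ r i) → r' ≠ r →
      ∑ i : G.V, lam i * (r' i : ℤ) ≠ 0)
    (hchar : ∑ i : G.V, (lam i).natAbs * r i < ringChar F)
    {x : QRep G (TruncRing F α) r} {y : QCoRep G (TruncRing F α) r}
    (hxy : ∀ i : G.V, momentMap G x y i
          = (tvar F α ^ (α - 1) * ((lam i : ℤ) : TruncRing F α)) •
              (1 : Matrix (Fin (r i)) (Fin (r i)) (TruncRing F α))) :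
    AbsIndec G F α x := by
  intro K _ _ _ hdec
  set φ := truncMap (algebraMap F K) α
  obtain ⟨r', h0, hle, hne, e, he, htr⟩ := Decomposable.exists_mem_endAlg_trace hdec
  have hsum := sum_trace_mul_momentMap e (fun a => (x a).map φ) (fun a => (y a).map φ)
  have hR : ∑ a, ((e (G.t a) * (x a).map φ - (x a).map φ * e (G.s a)) * (y a).map φ).trace = 0 :=
    Finset.sum_eq_zero fun a _ => by rw [mem_endAlg.1 he a]; simp
  have hL : ∀ i, (e i * momentMap G (fun a => (x a).map φ) (fun a => (y a).map φ) i).trace =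
      tvar K α ^ (α - 1) * ((lam i * (r' i : ℤ) : ℤ) : TruncRing K α) := by
    intro i
    have hφ : φ (tvar F α ^ (α - 1) * (lam i : TruncRing F α)) =
        tvar K α ^ (α - 1) * (lam i : TruncRing K α) :=
      (map_mul φ _ _).trans
        (congrArg₂ (· * ·) ((map_pow φ _ _).trans (by rw [truncMap_tvar])) (map_intCast φ _))
    rw [momentMap_map, hxy, map_smul_one, trace_mul_smul_one, hφ, htr, Int.cast_mul, mul_assoc,
      Int.cast_natCast]
  rw [hR, Finset.sum_congr rfl fun i _ => hL i, ← Finset.mul_sum, ← Int.cast_sum,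
    tvar_pow_mul hα, map_intCast] at hsum
  have hK : ((∑ i, lam i * (r' i : ℤ) : ℤ) : K) = 0 := by
    by_contra h
    exact tvar_pow_ne_zero hα
      (((isUnit_iff_ne_zero.2 h).map (algebraMap K (TruncRing K α))).mul_right_eq_zero.1 hsum)
  have : CharP K (ringChar F) := charP_of_injective_algebraMap (algebraMap F K).injective _
  rw [CharP.intCast_eq_zero_iff K (ringChar F)] at hK
  have hlt : (∑ i, lam i * (r' i : ℤ)).natAbs < ringChar F := by
    refine lt_of_le_of_lt ?_ hchar
    refine (Int.natAbs_sum_le _ _).trans (Finset.sum_le_sum fun i _ => ?_)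
    rw [Int.natAbs_mul, Int.natAbs_natCast]
    exact Nat.mul_le_mul_left _ (hle i)
  exact hgen r' h0 hle hne (Int.eq_zero_of_abs_lt_dvd hK (by
    rw [Int.abs_eq_natAbs]
    exact_mod_cast hlt))

end AbsIndec

section Duality

variable {G : FinQuiver} {F R : Type} [Field F] [CommRing R] [Algebra F R] {r : G.V → ℕ}
  {res : R →ₗ[F] F}

theorem matrix_eq_zero_of_forall_trace_mul (hres : ∀ a, (∀ b, res (a * b) = 0) → a = 0) {m n : ℕ}
    {A : Matrix (Fin m) (Fin n) R}
    (h : ∀ B : Matrix (Fin n) (Fin m) R, res (A * B).trace = 0) : A = 0 := by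
  ext k l
  refine hres _ fun b => ?_
  have hb := h (Matrix.single l k b)
  rwa [Matrix.trace_mul_single, MulOpposite.smul_eq_mul_unop] at hb

/-- The bilinear form `(ξ, η) ↦ Σᵢ res(tr(ξᵢ ηᵢ))` on `∏ᵢ Mat_{rᵢ}(R)`. -/
noncomputable def traceForm (res : R →ₗ[F] F) (r : G.V → ℕ) :
    LinearMap.BilinForm F (QMat G R r) :=
  LinearMap.mk₂ F (fun ξ η => res (∑ i, (ξ i * η i).trace))
    (fun ξ ξ' η => by simp [add_mul, Finset.sum_add_distrib])
    (fun c ξ η => by simp [← Finset.smul_sum])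
    (fun ξ η η' => by simp [mul_add, Finset.sum_add_distrib])
    (fun c ξ η => by simp [← Finset.smul_sum])

theorem traceForm_apply (ξ η : QMat G R r) :
    traceForm res r ξ η = res (∑ i, (ξ i * η i).trace) := rfl

theorem traceForm_isSymm : (traceForm (G := G) res r).IsSymm :=
  ⟨fun ξ η => by
    rw [traceForm_apply, traceForm_apply]
    exact congrArg res (Finset.sum_congr rfl fun i _ => Matrix.trace_mul_comm _ _)⟩

theorem traceForm_nondegenerate (hres : ∀ a, (∀ b, res (a * b) = 0) → a = 0) :
    (traceForm (G := G) res r).Nondegenerate := by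
  refine (LinearMap.IsRefl.nondegenerate_iff_separatingLeft
    (traceForm_isSymm (res := res) (r := r)).isRefl).2 ?_
  intro ξ hξ
  funext i
  refine matrix_eq_zero_of_forall_trace_mul hres fun B => ?_
  have h := hξ (Pi.single i B)
  rw [traceForm_apply, Finset.sum_eq_single i (fun j _ hj => by rw [Pi.single_eq_of_ne hj]; simp)
    (by simp), Pi.single_eq_same] at h
  exact h

/-- The endomorphism algebra is the annihilator of the image of the moment map. -/
theorem orthogonal_range_momentLin (hres : ∀ a, (∀ b, res (a * b) = 0) → a = 0)
    (x : QRep G R r) :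
    (traceForm res r).orthogonal (LinearMap.range ((momentLin x).restrictScalars F)) =
      (Subalgebra.toSubmodule (endAlg x)).restrictScalars F := by
  ext ξ
  have hflip : ∀ y, traceForm res r (momentMap G x y) ξ =
      res (∑ a, ((ξ (G.t a) * x a - x a * ξ (G.s a)) * y a).trace) := fun y => by
    rw [← sum_trace_mul_momentMap, ← traceForm_apply]
    exact traceForm_isSymm.eq _ _
  refine ⟨fun h a => sub_eq_zero.1 (matrix_eq_zero_of_forall_trace_mul hres fun B => ?_), ?_⟩
  · classical
    have := h _ ⟨Pi.single a B, rfl⟩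
    rw [← this]
    refine Eq.trans ?_ (hflip (Pi.single a B)).symm
    rw [Finset.sum_eq_single a (fun b _ hb => by rw [Pi.single_eq_of_ne hb]; simp) (by simp),
      Pi.single_eq_same]
  · rintro h _ ⟨y, rfl⟩
    refine (hflip y).trans ?_
    rw [Finset.sum_eq_zero fun a _ => by rw [mem_endAlg.1 h a]; simp, map_zero]

variable [FiniteDimensional F R]

theorem mem_range_momentLin_iff (hres : ∀ a, (∀ b, res (a * b) = 0) → a = 0)
    (x : QRep G R r) (θ : QMat G R r) :
    θ ∈ LinearMap.range ((momentLin x).restrictScalars F) ↔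
      ∀ ξ ∈ endAlg x, res (∑ i, (ξ i * θ i).trace) = 0 := by
  rw [← LinearMap.BilinForm.orthogonal_orthogonal (traceForm_nondegenerate hres)
    traceForm_isSymm.isRefl (LinearMap.range _), orthogonal_range_momentLin hres]
  rfl

theorem card_fibre_mul_card [Finite F] (hres : ∀ a, (∀ b, res (a * b) = 0) → a = 0)
    (x : QRep G R r) (y₀ : QCoRep G R r) :
    Nat.card {y : QCoRep G R r // momentMap G x y = momentMap G x y₀} * Nat.card (QMat G R r) =
      Nat.card (QCoRep G R r) * Nat.card (endAlg x) := by
  have horth := orthogonal_range_momentLin hres x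
  set f := (momentLin x).restrictScalars F
  have hker : Nat.card {y : QCoRep G R r // momentMap G x y = momentMap G x y₀} =
      Nat.card (LinearMap.ker f) :=
    Nat.card_congr ((Equiv.subRight y₀).subtypeEquiv fun y => by
      rw [LinearMap.mem_ker, Equiv.subRight_apply, map_sub, sub_eq_zero]
      rfl)
  have hend : Nat.card (endAlg x) =
      Nat.card ((Subalgebra.toSubmodule (endAlg x)).restrictScalars F) := rfl
  rw [hker, hend, ← horth, Module.natCard_eq_pow_finrank (K := F) (V := LinearMap.ker f),
    Module.natCard_eq_pow_finrank (K := F) (V := QMat G R r),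
    Module.natCard_eq_pow_finrank (K := F) (V := QCoRep G R r),
    Module.natCard_eq_pow_finrank (K := F) (V := (traceForm res r).orthogonal _), ← pow_add,
    ← pow_add, LinearMap.BilinForm.finrank_orthogonal (traceForm_nondegenerate hres),
    ← LinearMap.finrank_range_add_finrank_ker f]
  congr 1
  have := Submodule.finrank_le (LinearMap.range f)
  omega

end Duality

section Counting

variable {G : FinQuiver} {F : Type} [Field F] {α : ℕ} {r : G.V → ℕ}

theorem exists_nondegenerate_functional (hα : α ≠ 0) :
    ∃ res : TruncRing F α →ₗ[F] F, ∀ a, (∀ b, res (a * b) = 0) → a = 0 := by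
  obtain ⟨res, hres⟩ : ∃ res : Module.Dual F (TruncRing F α), res (tvar F α ^ (α - 1)) ≠ 0 := by
    by_contra! h
    exact tvar_pow_ne_zero hα ((Module.forall_dual_apply_eq_zero_iff F _).1 h)
  refine ⟨res, fun a ha => ?_⟩
  by_contra h0
  obtain ⟨b, hb⟩ := dvd_tvar_pow_of_ne_zero h0
  exact hres (hb ▸ ha b)

theorem exists_sum_mul_eq_one_of_gcd_eq_one {ι : Type*} [Fintype ι] {r : ι → ℕ}
    (h : Finset.univ.gcd r = 1) : ∃ n : ι → ℤ, ∑ i, n i * (r i : ℤ) = 1 := by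
  obtain ⟨n, hn⟩ := Finset.gcd_eq_sum_mul (Finset.univ : Finset ι) fun i => (r i : ℤ)
  have hdvd : (Finset.univ.gcd fun i => (r i : ℤ)).natAbs ∣ Finset.univ.gcd r :=
    Finset.dvd_gcd fun i hi => Int.natAbs_dvd_natAbs.2 (Finset.gcd_dvd (f := fun i => (r i : ℤ)) hi)
  rw [h, Nat.dvd_one, Int.natAbs_eq_iff, hn] at hdvd
  rcases hdvd with h1 | h1
  · exact ⟨n, by simpa [mul_comm] using h1⟩
  · exact ⟨-n, by simpa [mul_comm, neg_eq_iff_eq_neg] using h1⟩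

theorem AbsIndec.glAct {x : QRep G (TruncRing F α) r} (hx : AbsIndec G F α x)
    (g : ∀ i : G.V, (Matrix (Fin (r i)) (Fin (r i)) (TruncRing F α))ˣ) :
    AbsIndec G F α (_root_.glAct G g x) := by
  intro K _ _ _ h
  rw [glAct_map] at h
  exact hx K (Decomposable.of_glAct h)

/-- The change-of-basis action on absolutely indecomposable representations. -/
noncomputable instance absIndecMulAction :
    MulAction (∀ i : G.V, (Matrix (Fin (r i)) (Fin (r i)) (TruncRing F α))ˣ)
      {x : QRep G (TruncRing F α) r // AbsIndec G F α x} where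
  smul g x := ⟨glAct G g x.1, AbsIndec.glAct x.2 g⟩
  one_smul x := Subtype.ext (glAct_one x.1)
  mul_smul g h x := Subtype.ext (glAct_mul g h x.1)

theorem card_orbitRel_quotient [Fintype F] :
    Nat.card (MulAction.orbitRel.Quotient
      (∀ i : G.V, (Matrix (Fin (r i)) (Fin (r i)) (TruncRing F α))ˣ)
      {x : QRep G (TruncRing F α) r // AbsIndec G F α x}) = KacCountRank G F α r := by
  refine Nat.card_congr (Quot.congrRight fun x y => ?_)
  rw [MulAction.orbitRel_apply, MulAction.mem_orbit_symm]
  exact exists_congr fun g => Subtype.ext_iff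

theorem sum_card_stabilizer {H X : Type*} [Group H] [MulAction H X] [Fintype X] [Finite H] :
    ∑ x : X, Nat.card (MulAction.stabilizer H x) =
      Nat.card (MulAction.orbitRel.Quotient H X) * Nat.card H := by
  rw [← Nat.card_sigma, ← Nat.card_prod]
  exact Nat.card_congr (((Equiv.subtypeProdEquivSigmaSubtype
    fun (b : X) (a : H) => a ∈ MulAction.stabilizer H b).symm.trans
      (((Equiv.prodComm X H).subtypeEquiv fun _ => Iff.rfl).trans
        (Equiv.subtypeProdEquivSigmaSubtype
          fun (a : H) (b : X) => b ∈ MulAction.fixedBy X a))).trans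
    (MulAction.sigmaFixedByEquivOrbitsProdGroup H X))

theorem card_addMonoidHom_ne_zero {A B : Type*} [AddGroup A] [Finite A] [AddGroup B]
    {f : A →+ B} (hf : Function.Surjective f) :
    (Nat.card {a // f a ≠ 0} : ℚ) = Nat.card A * (1 - (Nat.card B : ℚ)⁻¹) := by
  have : Finite B := Finite.of_surjective f hf
  have hB : (Nat.card B : ℚ) ≠ 0 := Nat.cast_ne_zero.2 Nat.card_pos.ne'
  have hmul : Nat.card A = Nat.card B * Nat.card f.ker := by
    rw [AddSubgroup.card_eq_card_quotient_mul_card_addSubgroup f.ker,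
      Nat.card_congr (QuotientAddGroup.quotientKerEquivOfSurjective f hf).toEquiv]
  have hadd : Nat.card A = Nat.card f.ker + Nat.card {a // f a ≠ 0} := by
    classical
    rw [← Nat.card_sum]
    exact (Nat.card_congr (Equiv.sumCompl fun a => f a = 0)).symm
  have hmul' : (Nat.card A : ℚ) = Nat.card B * Nat.card f.ker := by exact_mod_cast hmul
  have hadd' : (Nat.card A : ℚ) = Nat.card f.ker + Nat.card {a // f a ≠ 0} := by
    exact_mod_cast hadd
  rw [mul_sub, mul_one, hadd', eq_sub_iff_add_eq, add_comm, add_left_inj, ← hadd', hmul']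
  field_simp

variable [Fintype F]

theorem AbsIndec.card_stabilizer (hα : α ≠ 0) {n : G.V → ℤ} (hn : ∑ i, n i * (r i : ℤ) = 1)
    (x : {x : QRep G (TruncRing F α) r // AbsIndec G F α x}) :
    (Nat.card (MulAction.stabilizer
        (∀ i : G.V, (Matrix (Fin (r i)) (Fin (r i)) (TruncRing F α))ˣ) x) : ℚ) =
      Nat.card (endAlg x.1) * (1 - (Fintype.card F : ℚ)⁻¹) := by
  have : Finite (TruncRing F α) := Module.finite_of_finite F
  set τ : endAlg x.1 →+ F :=
    (traceFunctional F hα r n).comp (endAlg x.1).subtype.toAddMonoidHom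
  have hτ : Function.Surjective τ := fun c => by
    refine ⟨⟨algebraMap F _ c, (endAlg x.1).algebraMap_mem (algebraMap F (TruncRing F α) c)⟩, ?_⟩
    have := traceFunctional_eq hα (ξ := algebraMap F (QMat G (TruncRing F α) r) c) (c := c)
      (by simp) n
    rwa [hn, Int.cast_one, mul_one] at this
  rw [← Nat.card_eq_fintype_card, ← card_addMonoidHom_ne_zero hτ]
  congr 1
  have hmem : ∀ g : ∀ i : G.V, (Matrix (Fin (r i)) (Fin (r i)) (TruncRing F α))ˣ,
      g ∈ MulAction.stabilizer _ x ↔ (fun i => (g i).val) ∈ endAlg x.1 := fun g => by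
    rw [← glAct_eq_self_iff]
    exact Subtype.ext_iff
  refine Nat.card_eq_of_bijective (fun g => ⟨⟨fun i => (g.1 i).val, (hmem g.1).1 g.2⟩,
    (AbsIndec.isUnit_iff hα x.2 hn ((hmem g.1).1 g.2)).1 (Pi.isUnit_iff.2 fun i => (g.1 i).isUnit)⟩)
    ⟨fun g h hgh => ?_, fun ξ => ?_⟩
  · refine Subtype.ext (funext fun i => Units.ext ?_)
    exact congrFun (congrArg (fun ξ => ξ.1.1) hgh) i
  · have hu := Pi.isUnit_iff.1 ((AbsIndec.isUnit_iff hα x.2 hn ξ.1.2).2 ξ.2)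
    exact ⟨⟨fun i => (hu i).unit, (hmem _).2 ξ.1.2⟩, rfl⟩

theorem card_qmat (F : Type) [Field F] [Fintype F] (α : ℕ) (r : G.V → ℕ) :
    Nat.card (QMat G (TruncRing F α) r) = Fintype.card F ^ (α * ∑ i, r i * r i) := by
  rw [Module.natCard_eq_pow_finrank (K := F), Nat.card_eq_fintype_card,
    Module.finrank_pi_fintype, Finset.mul_sum]
  simp [Module.finrank_matrix, finrank_truncRing, mul_comm]

theorem card_qcoRep (F : Type) [Field F] [Fintype F] (α : ℕ) (r : G.V → ℕ) :
    Nat.card (QCoRep G (TruncRing F α) r) =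
      Fintype.card F ^ (α * ∑ a, r (G.s a) * r (G.t a)) := by
  rw [Module.natCard_eq_pow_finrank (K := F), Nat.card_eq_fintype_card,
    Module.finrank_pi_fintype, Finset.mul_sum]
  simp [Module.finrank_matrix, finrank_truncRing, mul_comm]

theorem card_qcoRep_eq (F : Type) [Field F] [Fintype F] (α : ℕ) (r : G.V → ℕ) :
    (Nat.card (QCoRep G (TruncRing F α) r) : ℚ) =
      (Fintype.card F : ℚ) ^ (-(α : ℤ) * eulerForm G r r) *
        Nat.card (QMat G (TruncRing F α) r) := by
  have hq : (Fintype.card F : ℚ) ≠ 0 := Nat.cast_ne_zero.2 Fintype.card_ne_zero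
  rw [card_qmat, card_qcoRep, Nat.cast_pow, Nat.cast_pow, ← zpow_natCast, ← zpow_natCast,
    ← zpow_add₀ hq, eulerForm]
  congr 1
  push_cast
  ring

theorem AbsIndec.exists_momentMap_eq (hα : α ≠ 0) {n : G.V → ℤ}
    (hn : ∑ i, n i * (r i : ℤ) = 1) {lam : G.V → ℤ} (hlam : ∑ i, lam i * (r i : ℤ) = 0)
    {x : QRep G (TruncRing F α) r} (hx : AbsIndec G F α x) :
    ∃ y, momentMap G x y = fun i => (tvar F α ^ (α - 1) * ((lam i : ℤ) : TruncRing F α)) •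
      (1 : Matrix (Fin (r i)) (Fin (r i)) (TruncRing F α)) := by
  obtain ⟨res, hres⟩ := exists_nondegenerate_functional (F := F) hα
  refine (mem_range_momentLin_iff hres x _).2 fun ξ hξ => ?_
  have h0 := traceFunctional_eq hα (AbsIndec.isNilpotent_sub hα hx hn hξ) lam
  rw [hlam, Int.cast_zero, mul_zero] at h0
  have hsum : ∑ i, (ξ i * ((tvar F α ^ (α - 1) * ((lam i : ℤ) : TruncRing F α)) •
      (1 : Matrix (Fin (r i)) (Fin (r i)) (TruncRing F α)))).trace =
      tvar F α ^ (α - 1) * ∑ i, (lam i : TruncRing F α) * (ξ i).trace := by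
    rw [Finset.mul_sum]
    refine Finset.sum_congr rfl fun i _ => ?_
    rw [trace_mul_smul_one, mul_assoc]
  have hzero : truncEval F hα (∑ i, (lam i : TruncRing F α) * (ξ i).trace) = 0 := h0
  rw [hsum, tvar_pow_mul hα, hzero, map_zero, zero_mul, map_zero]

end Counting

end FinQuiver

/-- Let `Q` be a finite quiver, `α ≥ 1`, `r ∈ ℕ^{Q₀}` an indivisible rank
vector and `λ ∈ ℤ^{Q₀}` generic with respect to `r`.  Let `𝔽_q` be a finite field of
characteristic `p > Σ_i |λ_i| r_i` and `R := 𝔽_q[t]/(t^α)`.  Then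
`#{(x,y) : μ(x,y) = (t^{α−1} λ_i · Id)_i} = #GL_{α,r} · q^{−α⟨r,r⟩} · A_{(Q,α),r}(q)/(1 − q⁻¹)`. -/
theorem deformed_fibre_count (G : FinQuiver) (α : ℕ) (hα : 1 ≤ α) (r : G.V → ℕ)
    (hind : Finset.univ.gcd r = 1)
    (lam : G.V → ℤ) (hlam : ∑ i : G.V, lam i * (r i : ℤ) = 0)
    (hgen : ∀ r' : G.V → ℕ, r' ≠ 0 → (∀ i, r' i ≤ r i) → r' ≠ r →
      ∑ i : G.V, lam i * (r' i : ℤ) ≠ 0)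
    (F : Type) [Field F] [Fintype F]
    (hchar : ∑ i : G.V, (lam i).natAbs * r i < ringChar F) :
    (Nat.card {xy : QRep G (TruncRing F α) r × QCoRep G (TruncRing F α) r //
        ∀ i : G.V, momentMap G xy.1 xy.2 i
          = (tvar F α ^ (α - 1) * ((lam i : ℤ) : TruncRing F α)) •
              (1 : Matrix (Fin (r i)) (Fin (r i)) (TruncRing F α))} : ℚ)
      = (Nat.card (∀ i : G.V, (Matrix (Fin (r i)) (Fin (r i)) (TruncRing F α))ˣ) : ℚ)
        * (Fintype.card F : ℚ) ^ (-(α : ℤ) * eulerForm G r r)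
        * (KacCountRank G F α r : ℚ) / (1 - (Fintype.card F : ℚ)⁻¹) := by
  have hα' : α ≠ 0 := Nat.one_le_iff_ne_zero.1 hα
  have hfinR : Finite (TruncRing F α) := Module.finite_of_finite F
  obtain ⟨n, hn⟩ := FinQuiver.exists_sum_mul_eq_one_of_gcd_eq_one hind
  obtain ⟨res, hres⟩ := FinQuiver.exists_nondegenerate_functional (F := F) hα'
  set θ : FinQuiver.QMat G (TruncRing F α) r := fun i =>
    (tvar F α ^ (α - 1) * ((lam i : ℤ) : TruncRing F α)) • 1
  have := Fintype.ofFinite {x : QRep G (TruncRing F α) r // AbsIndec G F α x}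
  have hq : (1 : ℚ) - (Fintype.card F : ℚ)⁻¹ ≠ 0 := by
    have h1 : (1 : ℚ) < Fintype.card F := by exact_mod_cast Fintype.one_lt_card
    exact (sub_pos.2 (inv_lt_one_of_one_lt₀ h1)).ne'
  have hQ : (Nat.card (FinQuiver.QMat G (TruncRing F α) r) : ℚ) ≠ 0 :=
    Nat.cast_ne_zero.2 Nat.card_pos.ne'
  let e : {xy : QRep G (TruncRing F α) r × QCoRep G (TruncRing F α) r //
      ∀ i, momentMap G xy.1 xy.2 i = θ i} ≃
      Σ x : {x : QRep G (TruncRing F α) r // AbsIndec G F α x},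
        {y : QCoRep G (TruncRing F α) r // momentMap G x.1 y = θ} :=
    { toFun := fun p => ⟨⟨p.1.1, FinQuiver.absIndec_of_momentMap_eq hα' lam hgen hchar p.2⟩,
        ⟨p.1.2, funext p.2⟩⟩
      invFun := fun s => ⟨(s.1.1, s.2.1), fun i => congrFun s.2.2 i⟩
      left_inv := fun _ => rfl
      right_inv := fun _ => rfl }
  have hfib : ∀ x : {x : QRep G (TruncRing F α) r // AbsIndec G F α x},
      (Nat.card {y : QCoRep G (TruncRing F α) r // momentMap G x.1 y = θ} : ℚ) =
        (Fintype.card F : ℚ) ^ (-(α : ℤ) * eulerForm G r r) / (1 - (Fintype.card F : ℚ)⁻¹) *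
          Nat.card (MulAction.stabilizer
            (∀ i : G.V, (Matrix (Fin (r i)) (Fin (r i)) (TruncRing F α))ˣ) x) := by
    intro x
    obtain ⟨y₀, hy₀⟩ := FinQuiver.AbsIndec.exists_momentMap_eq hα' hn hlam x.2
    have hcard := FinQuiver.card_fibre_mul_card hres x.1 y₀
    rw [hy₀] at hcard
    have hcard' : (Nat.card {y : QCoRep G (TruncRing F α) r // momentMap G x.1 y = θ} : ℚ) *
        Nat.card (FinQuiver.QMat G (TruncRing F α) r) =
        Nat.card (QCoRep G (TruncRing F α) r) * Nat.card (FinQuiver.endAlg x.1) := by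
      exact_mod_cast hcard
    rw [FinQuiver.card_qcoRep_eq] at hcard'
    rw [FinQuiver.AbsIndec.card_stabilizer hα' hn]
    refine mul_right_cancel₀ hQ (hcard'.trans ?_)
    rw [mul_comm (Nat.card (FinQuiver.endAlg x.1) : ℚ), ← mul_assoc, div_mul_cancel₀ _ hq]
    ring
  rw [Nat.card_congr e, Nat.card_sigma, Nat.cast_sum, Finset.sum_congr rfl fun x _ => hfib x,
    ← Finset.mul_sum, ← Nat.cast_sum, FinQuiver.sum_card_stabilizer,
    FinQuiver.card_orbitRel_quotient, Nat.cast_mul]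
  ring
end
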